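/- arXiv:2101.03984 — 3 statements merged into one kernel-verified Lean document; each statement's English description precedes it below -/
import Mathlib

section
/- Let B ⊂ ℝ⁴ be open and f = (f⁴,…,f⁷): B → ℝ⁴ smooth, with tangent vectors v_j(x) and real forms F₁(x) = Σ_{a=4}^{7}(∂f^a/∂x⁰)(x)·dy^a and F₂(x) = Σ_{i=1}^{3}Σ_{a=4}^{7}(∂f^a/∂x^i)(x)·dx^i∧dy^a as in the context. Then at every x ∈ B: (i) φ(v₁,v₂,v₃) = 1 − ½·*₇( φ ∧ F₂² ); and (ii) Σ_{k∈ℤ/3} φ(F₁♯, v_{k+1}, v_{k+2})·dx^k = −*₇( F₁ ∧ F₂ ∧ φ ), where k ranges over {1,2,3} with indices taken mod 3 in {1,2,3}. -/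
open scoped BigOperators

noncomputable section

namespace FMpaper

variable {K : Type*} [NormedField K] [NormedAlgebra ℝ K]

/-- Coefficient model for the exterior algebra of `(ℝⁿ)*` with scalars in `K`:
a form is given by its coefficients on the basis `e^S`, `S ⊆ {0, …, n-1}` sorted. -/
abbrev Form (K : Type*) (n : ℕ) := Finset (Fin n) → K

variable {n : ℕ}

/-- Sign such that `e^s ∧ e^t = signMerge s t • e^(s ∪ t)` for disjoint sorted `s, t`. -/
def signMerge (s t : Finset (Fin n)) : K :=
  (-1 : K) ^ (((s ×ˢ t).filter (fun p => p.2 < p.1)).card)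

/-- Wedge product. -/
def wedge (α β : Form K n) : Form K n :=
  fun u => ∑ s ∈ u.powerset, signMerge s (u \ s) * α s * β (u \ s)

/-- Hodge star operator (for the standard inner product and orientation `e^{0⋯(n-1)}`). -/
def hstar (α : Form K n) : Form K n :=
  fun t => signMerge tᶜ t * α tᶜ

/-- Interior product with the basis vector `e_μ`. -/
def iprodB (μ : Fin n) (α : Form K n) : Form K n :=
  fun t => if μ ∈ t then 0
    else (-1 : K) ^ ((t.filter (fun j => j < μ)).card) * α (insert μ t)

/-- Interior product with the vector `v`. -/
def iprod (v : Fin n → K) (α : Form K n) : Form K n :=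
  fun t => ∑ μ, v μ * iprodB μ α t

/-- The basis covector `e^i` as a 1-form. -/
def e1 (i : Fin n) : Form K n := fun s => if s = {i} then 1 else 0

/-- The covector `v♭` dual to a vector `v`. -/
def flat (v : Fin n → K) : Form K n := ∑ i, v i • e1 i

/-- The vector `α♯` dual to a 1-form `α`. -/
def sharp1 (α : Form K n) : Fin n → K := fun i => α {i}

/-- The inner product of forms (extended `K`-bilinearly). -/
def inner' (α β : Form K n) : K := ∑ s, α s * β s

/-- The (Euclidean) norm of a form; for an `√-1 ℝ`-valued form `√-1 γ` this is `‖γ‖`. -/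
def fnorm (α : Form K n) : ℝ := Real.sqrt (∑ s, ‖α s‖ ^ 2)

/-- `α` is homogeneous of degree `k`. -/
def isGrade (k : ℕ) (α : Form K n) : Prop := ∀ s, s.card ≠ k → α s = 0

/-- Evaluation of a `k`-form on `k` vectors. -/
def evalForm {k : ℕ} (α : Form K n) (v : Fin k → (Fin n → K)) : K :=
  ∑ s : Finset (Fin n), α s *
    (if h : s.card = k then
      Matrix.det (Matrix.of fun i j => v i ((s.orderIsoOfFin h j : Fin n))) else 0)

/-- The matrix of the skew-symmetric endomorphism `γ♯` associated with a 2-form `γ`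
via `⟨γ♯ u, v⟩ = γ(u, v)`. -/
def mat2 (γ : Form K n) : Matrix (Fin n) (Fin n) K :=
  Matrix.of fun i j => if i < j then γ {i, j} else if j < i then - γ {i, j} else 0

/-- The standard `G₂` 3-form `φ = e^{123}+e^{145}+e^{167}+e^{246}−e^{257}−e^{347}−e^{356}`
on `ℝ⁷` (indices `1, …, 7` shifted to `0, …, 6`). -/
def phi7 : Form K 7 := fun s =>
  if s = ({0, 1, 2} : Finset (Fin 7)) then 1
  else if s = ({0, 3, 4} : Finset (Fin 7)) then 1
  else if s = ({0, 5, 6} : Finset (Fin 7)) then 1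
  else if s = ({1, 3, 5} : Finset (Fin 7)) then 1
  else if s = ({1, 4, 6} : Finset (Fin 7)) then -1
  else if s = ({2, 3, 6} : Finset (Fin 7)) then -1
  else if s = ({2, 4, 5} : Finset (Fin 7)) then -1
  else 0

/-- `*₇φ = e^{4567}+e^{2367}+e^{2345}+e^{1357}−e^{1346}−e^{1256}−e^{1247}` on `ℝ⁷`. -/
def psi7 : Form K 7 := fun s =>
  if s = ({3, 4, 5, 6} : Finset (Fin 7)) then 1
  else if s = ({1, 2, 5, 6} : Finset (Fin 7)) then 1
  else if s = ({1, 2, 3, 4} : Finset (Fin 7)) then 1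
  else if s = ({0, 2, 4, 6} : Finset (Fin 7)) then 1
  else if s = ({0, 2, 3, 5} : Finset (Fin 7)) then -1
  else if s = ({0, 1, 4, 5} : Finset (Fin 7)) then -1
  else if s = ({0, 1, 3, 6} : Finset (Fin 7)) then -1
  else 0

/-- The `G₂` 3-form `φ` on `V = span{e₁, …, e₇} ⊂ ℝ⁸`, regarded as a form on `ℝ⁸`
annihilated by `i(e₀)` (indices `1, …, 7` of `ℝ⁸`). -/
def phi8 : Form K 8 := fun s =>
  if s = ({1, 2, 3} : Finset (Fin 8)) then 1
  else if s = ({1, 4, 5} : Finset (Fin 8)) then 1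
  else if s = ({1, 6, 7} : Finset (Fin 8)) then 1
  else if s = ({2, 4, 6} : Finset (Fin 8)) then 1
  else if s = ({2, 5, 7} : Finset (Fin 8)) then -1
  else if s = ({3, 4, 7} : Finset (Fin 8)) then -1
  else if s = ({3, 5, 6} : Finset (Fin 8)) then -1
  else 0

/-- `*₇φ` on `V ⊂ ℝ⁸`, regarded as a 4-form on `ℝ⁸` annihilated by `i(e₀)`. -/
def psi8 : Form K 8 := fun s =>
  if s = ({4, 5, 6, 7} : Finset (Fin 8)) then 1
  else if s = ({2, 3, 6, 7} : Finset (Fin 8)) then 1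
  else if s = ({2, 3, 4, 5} : Finset (Fin 8)) then 1
  else if s = ({1, 3, 5, 7} : Finset (Fin 8)) then 1
  else if s = ({1, 3, 4, 6} : Finset (Fin 8)) then -1
  else if s = ({1, 2, 5, 6} : Finset (Fin 8)) then -1
  else if s = ({1, 2, 4, 7} : Finset (Fin 8)) then -1
  else 0

/-- The standard Cayley 4-form `Φ = e⁰ ∧ φ + *₇φ` on `ℝ⁸`. -/
def Phi8 : Form K 8 := wedge (e1 0) phi8 + psi8

/-- The index set of `V = span{e₁, …, e₇} ⊂ ℝ⁸`. -/
def Vset : Finset (Fin 8) := {1, 2, 3, 4, 5, 6, 7}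

/-- The Hodge star `*₇` of `V ⊂ ℝ⁸` (volume form `e^{1⋯7}`), acting on forms on `ℝ⁸`
annihilated by `i(e₀)`. -/
def star7 (α : Form K 8) : Form K 8 :=
  fun t => if (0 : Fin 8) ∈ t then 0 else signMerge (Vset \ t) t * α (Vset \ t)

/-- `α` is (the pullback of) a form on `V`, i.e. `i(e₀) α = 0`. -/
def onV (α : Form K 8) : Prop := ∀ s, (0 : Fin 8) ∈ s → α s = 0

/-- `λ²(α) = ½ (e⁰ ∧ α + i(α♯) φ)` for `α ∈ V*`. -/
def lambda2 (α : Form K 8) : Form K 8 :=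
  (2 : K)⁻¹ • (wedge (e1 0) α + iprod (sharp1 α) phi8)

/-- `λ⁴(α) = (1/√8) (e⁰ ∧ i(α♯) *₇φ − α ∧ φ)` for `α ∈ V*`. -/
def lambda4 (α : Form K 8) : Form K 8 :=
  (algebraMap ℝ K (Real.sqrt 8))⁻¹ • (wedge (e1 0) (iprod (sharp1 α) psi8) - wedge α phi8)

/-- `λ⁶(α) = *₈ λ²(α)` for `α ∈ V*`. -/
def lambda6 (α : Form K 8) : Form K 8 := hstar (lambda2 α)

/-- The projection `π²₇(α) = (α + *₈(Φ ∧ α))/4` onto `Λ²₇`. -/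
def pi27 (α : Form K 8) : Form K 8 := (4 : K)⁻¹ • (α + hstar (wedge Phi8 α))

/-- The projection `π⁴₇(β) = Σ_{μ=1}^{7} ⟨β, λ⁴(e^μ)⟩ λ⁴(e^μ)` onto `Λ⁴₇`. -/
def pi47 (β : Form K 8) : Form K 8 :=
  ∑ μ : Fin 7, inner' β (lambda4 (e1 μ.succ)) • lambda4 (e1 μ.succ)

/-- `τ(u₀,u₁,u₂,u₃) = Σ_{μ=1}^{7} λ⁴(e^μ)(u₀,u₁,u₂,u₃) ⬝ λ⁴(e^μ) = π⁴₇(u₀♭∧u₁♭∧u₂♭∧u₃♭)`. -/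
def tau4 (u : Fin 4 → (Fin 8 → K)) : Form K 8 :=
  ∑ μ : Fin 7, evalForm (lambda4 (e1 μ.succ)) u • lambda4 (e1 μ.succ)

/-- Partial derivative `∂f^a/∂x^j` at `x`. -/
def pd {m p : ℕ} (f : (Fin m → ℝ) → (Fin p → ℝ)) (x : Fin m → ℝ) (j : Fin m) (a : Fin p) : ℝ :=
  fderiv ℝ f x (Pi.single j 1) a


/-! Graph setting for Cayley `T⁴`-fibrations: `ℝ⁸ = ℝ⁴ × ℝ⁴` with coordinates
`(x⁰,…,x³,y⁴,…,y⁷)`. -/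

/-- The index of the coordinate `x^j` in `ℝ⁸`. -/
def xi (j : Fin 4) : Fin 8 := Fin.castAdd 4 j

/-- The index of the coordinate `y^a` (`a = 4,…,7` shifted to `0,…,3`) in `ℝ⁸`. -/
def yi (a : Fin 4) : Fin 8 := a.addNat 4

/-- The spanning tangent vectors `v_j = ∂_j + Σ_a (∂f^a/∂x^j) ∂_a` of the graph of `f`. -/
def vG (f : (Fin 4 → ℝ) → (Fin 4 → ℝ)) (x : Fin 4 → ℝ) (j : Fin 4) : Fin 8 → ℝ :=
  Pi.single (xi j) 1 + ∑ a : Fin 4, pd f x j a • (Pi.single (yi a) 1 : Fin 8 → ℝ)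

/-- The real 2-form `γ` with `F_∇^S = √-1 γ`, i.e. `γ = Σ_{j,a} (∂f^a/∂x^j) dx^j ∧ dy^a`. -/
def gammaS (f : (Fin 4 → ℝ) → (Fin 4 → ℝ)) (x : Fin 4 → ℝ) : Form ℝ 8 :=
  ∑ j : Fin 4, ∑ a : Fin 4, pd f x j a • wedge (e1 (xi j)) (e1 (yi a))

/-- The `√-1 ℝ`-valued curvature 2-form
`F_∇^S = √-1 Σ_{j,a} (∂f^a/∂x^j) dx^j ∧ dy^a` of the real Fourier–Mukai transform. -/
def FS8 (f : (Fin 4 → ℝ) → (Fin 4 → ℝ)) (x : Fin 4 → ℝ) : Form ℂ 8 :=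
  fun s => Complex.I * (gammaS f x s : ℂ)

/-- `F₁ = Σ_a (∂f^a/∂x⁰) dy^a`. -/
def F1g (f : (Fin 4 → ℝ) → (Fin 4 → ℝ)) (x : Fin 4 → ℝ) : Form ℝ 8 :=
  ∑ a : Fin 4, pd f x 0 a • e1 (yi a)

/-- `F₂ = Σ_{i=1}^{3} Σ_a (∂f^a/∂x^i) dx^i ∧ dy^a`. -/
def F2g (f : (Fin 4 → ℝ) → (Fin 4 → ℝ)) (x : Fin 4 → ℝ) : Form ℝ 8 :=
  ∑ i : Fin 3, ∑ a : Fin 4, pd f x i.succ a • wedge (e1 (xi i.succ)) (e1 (yi a))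

lemma wedge_e1 (i : Fin n) (β : Form ℝ n) (u : Finset (Fin n)) :
    wedge (e1 i) β u = if i ∈ u then signMerge {i} (u \ {i}) * β (u \ {i}) else 0 := by
  unfold wedge e1
  simp only [mul_ite, mul_one, mul_zero, ite_mul, zero_mul]
  rw [Finset.sum_ite_eq']
  simp

lemma wedge_e1_e1 (i j : Fin n) (h : i < j) (u : Finset (Fin n)) :
    wedge (e1 i) (e1 j) u = if u = {i, j} then (1 : ℝ) else 0 := by
  rw [wedge_e1]
  by_cases hu : u = {i, j}
  · subst hu
    have h2 : ({i, j} : Finset (Fin n)) \ {i} = {j} := by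
      ext k; simp only [Finset.mem_sdiff, Finset.mem_insert, Finset.mem_singleton]
      constructor
      · tauto
      · rintro rfl; exact ⟨Or.inr rfl, h.ne'⟩
    simp [h2, e1, signMerge, Finset.filter_singleton, h.not_gt]
  · rw [if_neg hu]
    split_ifs with hi
    · have : u \ {i} ≠ {j} := by
        intro h3
        apply hu
        rw [← h3]
        ext k; simp only [Finset.mem_sdiff, Finset.mem_insert, Finset.mem_singleton]
        constructor
        · intro hk; by_cases k = i <;> tauto
        · rintro (rfl | hk); exacts [hi, hk.1]
      simp [e1, this]
    · rfl

lemma F2g_apply (f : (Fin 4 → ℝ) → (Fin 4 → ℝ)) (x : Fin 4 → ℝ) (s : Finset (Fin 8)) :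
    F2g f x s = ∑ i : Fin 3, ∑ a : Fin 4,
      if s = {xi i.succ, yi a} then pd f x i.succ a else 0 := by
  have h : ∀ (i : Fin 3) (a : Fin 4), xi i.succ < yi a := by decide
  simp only [F2g, Finset.sum_apply, Pi.smul_apply, wedge_e1_e1 _ _ (h _ _), smul_eq_mul,
    mul_ite, mul_one, mul_zero]

lemma F1g_apply (f : (Fin 4 → ℝ) → (Fin 4 → ℝ)) (x : Fin 4 → ℝ) (s : Finset (Fin 8)) :
    F1g f x s = ∑ a : Fin 4, if s = {yi a} then pd f x 0 a else 0 := by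
  simp only [F1g, Finset.sum_apply, Pi.smul_apply, e1, smul_eq_mul, mul_ite, mul_one, mul_zero]

lemma phi8_eq (s : Finset (Fin 8)) : (phi8 s : ℝ) =
    (if s = {1, 2, 3} then 1 else 0) + (if s = {1, 4, 5} then 1 else 0)
    + (if s = {1, 6, 7} then 1 else 0) + (if s = {2, 4, 6} then 1 else 0)
    - (if s = {2, 5, 7} then 1 else 0) - (if s = {3, 4, 7} then 1 else 0)
    - (if s = {3, 5, 6} then 1 else 0) := by
  unfold phi8
  by_cases h1 : s = {1, 2, 3}
  · subst h1; simp +decide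
  by_cases h2 : s = {1, 4, 5}
  · subst h2; simp +decide
  by_cases h3 : s = {1, 6, 7}
  · subst h3; simp +decide
  by_cases h4 : s = {2, 4, 6}
  · subst h4; simp +decide
  by_cases h5 : s = {2, 5, 7}
  · subst h5; simp +decide
  by_cases h6 : s = {3, 4, 7}
  · subst h6; simp +decide
  by_cases h7 : s = {3, 5, 6}
  · subst h7; simp +decide
  simp only [h1, h2, h3, h4, h5, h6, h7, if_false]; norm_num

lemma sum_phi8 (T : Finset (Finset (Fin 8))) (g : Finset (Fin 8) → ℝ) :
    ∑ s ∈ T, phi8 s * g s =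
    (if {1, 2, 3} ∈ T then g {1, 2, 3} else 0) + (if {1, 4, 5} ∈ T then g {1, 4, 5} else 0)
    + (if {1, 6, 7} ∈ T then g {1, 6, 7} else 0) + (if {2, 4, 6} ∈ T then g {2, 4, 6} else 0)
    - (if {2, 5, 7} ∈ T then g {2, 5, 7} else 0) - (if {3, 4, 7} ∈ T then g {3, 4, 7} else 0)
    - (if {3, 5, 6} ∈ T then g {3, 5, 6} else 0) := by
  simp only [phi8_eq, add_mul, sub_mul, ite_mul, one_mul, zero_mul, Finset.sum_add_distrib,
    Finset.sum_sub_distrib, Finset.sum_ite_eq']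

lemma wedge_phi_left (β : Form ℝ 8) (u : Finset (Fin 8)) :
    wedge phi8 β u = ∑ s ∈ u.powerset, phi8 s * (signMerge s (u \ s) * β (u \ s)) := by
  unfold wedge
  exact Finset.sum_congr rfl fun s _ => by ring

lemma wedge_phi_right (α : Form ℝ 8) (u : Finset (Fin 8)) :
    wedge α phi8 u = ∑ s ∈ u.powerset, phi8 s * (signMerge (u \ s) s * α (u \ s)) := by
  unfold wedge
  refine Finset.sum_bij' (fun s _ => u \ s) (fun s _ => u \ s) ?_ ?_ ?_ ?_ ?_
  · intro s _; simp
  · intro s _; simp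
  · intro s hs; simpa using Finset.mem_powerset.1 hs
  · intro s hs; simpa using Finset.mem_powerset.1 hs
  · intro s hs
    have : u \ (u \ s) = s := by simpa using Finset.mem_powerset.1 hs
    simp only [this]; ring

lemma wedge_F1 (f : (Fin 4 → ℝ) → (Fin 4 → ℝ)) (x : Fin 4 → ℝ) (β : Form ℝ 8)
    (u : Finset (Fin 8)) :
    wedge (F1g f x) β u = ∑ a : Fin 4,
      if yi a ∈ u then pd f x 0 a * (signMerge {yi a} (u \ {yi a}) * β (u \ {yi a})) else 0 := by
  have : wedge (F1g f x) β u = ∑ a : Fin 4, pd f x 0 a * wedge (e1 (yi a)) β u := by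
    unfold wedge F1g
    simp only [Finset.sum_apply, Pi.smul_apply, smul_eq_mul, Finset.mul_sum, Finset.sum_mul]
    rw [Finset.sum_comm]
    refine Finset.sum_congr rfl fun a _ => Finset.sum_congr rfl fun s _ => by ring
  rw [this]
  simp only [wedge_e1, mul_ite, mul_zero]

lemma wedge_F2 (f : (Fin 4 → ℝ) → (Fin 4 → ℝ)) (x : Fin 4 → ℝ) (β : Form ℝ 8)
    (u : Finset (Fin 8)) :
    wedge (F2g f x) β u = ∑ i : Fin 3, ∑ a : Fin 4,
      if ({xi i.succ, yi a} : Finset (Fin 8)) ⊆ u then pd f x i.succ a *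
        (signMerge {xi i.succ, yi a} (u \ {xi i.succ, yi a}) * β (u \ {xi i.succ, yi a}))
      else 0 := by
  unfold wedge
  simp only [F2g_apply, Finset.mul_sum, Finset.sum_mul]
  rw [Finset.sum_comm]
  refine Finset.sum_congr rfl fun i _ => ?_
  rw [Finset.sum_comm]
  refine Finset.sum_congr rfl fun a _ => ?_
  simp only [mul_ite, mul_zero, ite_mul, zero_mul]
  rw [Finset.sum_ite_eq']
  simp only [Finset.mem_powerset]
  split_ifs <;> ring

lemma signMerge_even (s t : Finset (Fin 8))
    (h : Even ((s ×ˢ t).filter (fun p => p.2 < p.1)).card) : (signMerge s t : ℝ) = 1 := by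
  unfold signMerge; exact h.neg_one_pow

lemma signMerge_odd (s t : Finset (Fin 8))
    (h : Odd ((s ×ˢ t).filter (fun p => p.2 < p.1)).card) : (signMerge s t : ℝ) = -1 := by
  unfold signMerge; exact h.neg_one_pow

lemma isGrade_wedge (k l : ℕ) (α β : Form ℝ 8) (hα : isGrade k α) (hβ : isGrade l β) :
    isGrade (k + l) (wedge α β) := by
  intro u hu
  refine Finset.sum_eq_zero fun s hs => ?_
  have hc := Finset.card_sdiff_add_card_eq_card (Finset.mem_powerset.1 hs)
  by_cases h1 : s.card = k
  · have h2 : (u \ s).card ≠ l := by omega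
    rw [hβ _ h2, mul_zero]
  · rw [hα _ h1, mul_zero, zero_mul]

lemma grade_phi8 : isGrade 3 (phi8 : Form ℝ 8) := by
  intro s hs
  rw [phi8_eq]
  have h : ∀ t : Finset (Fin 8), t.card = 3 → s ≠ t := by rintro t ht rfl; exact hs ht
  rw [if_neg (h _ (by decide)), if_neg (h _ (by decide)), if_neg (h _ (by decide)),
    if_neg (h _ (by decide)), if_neg (h _ (by decide)), if_neg (h _ (by decide)),
    if_neg (h _ (by decide))]
  norm_num

lemma grade_F1 (f : (Fin 4 → ℝ) → (Fin 4 → ℝ)) (x : Fin 4 → ℝ) : isGrade 1 (F1g f x) := by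
  intro s hs
  rw [F1g_apply]
  refine Finset.sum_eq_zero fun a _ => if_neg ?_
  rintro rfl; simp at hs

lemma grade_F2 (f : (Fin 4 → ℝ) → (Fin 4 → ℝ)) (x : Fin 4 → ℝ) : isGrade 2 (F2g f x) := by
  intro s hs
  rw [F2g_apply]
  refine Finset.sum_eq_zero fun i _ => Finset.sum_eq_zero fun a _ => if_neg ?_
  rintro rfl
  revert hs
  revert i a
  decide

lemma det_triple (v : Fin 3 → Fin 8 → ℝ) (a b c : Fin 8) (hab : a < b) (hbc : b < c)  :
    (if h : ({a, b, c} : Finset (Fin 8)).card = 3 then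
      Matrix.det (Matrix.of fun i j =>
        v i ((({a, b, c} : Finset (Fin 8)).orderIsoOfFin h j : Fin 8))) else 0) =
    Matrix.det !![v 0 a, v 0 b, v 0 c; v 1 a, v 1 b, v 1 c; v 2 a, v 2 b, v 2 c] := by
  have h : ({a, b, c} : Finset (Fin 8)).card = 3 :=
    Finset.card_eq_three.2 ⟨a, b, c, hab.ne, (hab.trans hbc).ne, hbc.ne, rfl⟩
  rw [dif_pos h]
  have key : (![a, b, c] : Fin 3 → Fin 8) = ({a, b, c} : Finset (Fin 8)).orderEmbOfFin h := by
    apply Finset.orderEmbOfFin_unique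
    · intro i; fin_cases i <;> simp
    · intro i j hij
      fin_cases i <;> fin_cases j <;> simp_all
      exact hab.trans hbc
  simp only [Finset.coe_orderIsoOfFin_apply, ← key]
  congr 1
  ext i j; fin_cases i <;> fin_cases j <;> rfl

/-- determinant of the columns `a, b, c` of three row vectors -/
def d3 (v : Fin 3 → Fin 8 → ℝ) (a b c : Fin 8) : ℝ :=
    v 0 a * v 1 b * v 2 c - v 0 a * v 1 c * v 2 b
  - v 0 b * v 1 a * v 2 c + v 0 b * v 1 c * v 2 a
  + v 0 c * v 1 a * v 2 b - v 0 c * v 1 b * v 2 a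

lemma evalForm_phi8 (v : Fin 3 → Fin 8 → ℝ) : evalForm phi8 v =
    d3 v 1 2 3 + d3 v 1 4 5 + d3 v 1 6 7 + d3 v 2 4 6 - d3 v 2 5 7 - d3 v 3 4 7 - d3 v 3 5 6 := by
  unfold evalForm
  rw [sum_phi8]
  simp only [Finset.mem_univ, if_true]
  rw [det_triple v 1 2 3 (by decide) (by decide), det_triple v 1 4 5 (by decide) (by decide),
    det_triple v 1 6 7 (by decide) (by decide), det_triple v 2 4 6 (by decide) (by decide),
    det_triple v 2 5 7 (by decide) (by decide), det_triple v 3 4 7 (by decide) (by decide),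
    det_triple v 3 5 6 (by decide) (by decide)]
  simp only [Matrix.det_fin_three, Matrix.of_apply, Matrix.cons_val, d3]

lemma vG_eq (f : (Fin 4 → ℝ) → (Fin 4 → ℝ)) (x : Fin 4 → ℝ) (j : Fin 4) :
    vG f x j = ![if j = 0 then 1 else 0, if j = 1 then 1 else 0, if j = 2 then 1 else 0,
      if j = 3 then 1 else 0, pd f x j 0, pd f x j 1, pd f x j 2, pd f x j 3] := by
  ext k
  simp only [vG, Pi.add_apply, Finset.sum_apply, Pi.smul_apply, Pi.single_apply, smul_eq_mul,
    Fin.sum_univ_four]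
  fin_cases j <;> fin_cases k <;> simp +decide [xi, yi]

lemma sharp_eq (f : (Fin 4 → ℝ) → (Fin 4 → ℝ)) (x : Fin 4 → ℝ) :
    sharp1 (F1g f x) = ![0, 0, 0, 0, pd f x 0 0, pd f x 0 1, pd f x 0 2, pd f x 0 3] := by
  ext k
  simp only [sharp1, F1g_apply, Fin.sum_univ_four, Finset.singleton_inj]
  fin_cases k <;> simp +decide [yi]

lemma xi1 : xi (Fin.succ (0 : Fin 3)) = 1 := rfl
lemma xi2 : xi (Fin.succ (1 : Fin 3)) = 2 := rfl
lemma xi3 : xi (Fin.succ (2 : Fin 3)) = 3 := rfl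
lemma yi0 : yi 0 = 4 := rfl
lemma yi1 : yi 1 = 5 := rfl
lemma yi2 : yi 2 = 6 := rfl
lemma yi3 : yi 3 = 7 := rfl
lemma su0 : Fin.succ (0 : Fin 3) = 1 := rfl
lemma su1 : Fin.succ (1 : Fin 3) = 2 := rfl
lemma su2 : Fin.succ (2 : Fin 3) = 3 := rfl

lemma F2_zero (f : (Fin 4 → ℝ) → (Fin 4 → ℝ)) (x : Fin 4 → ℝ) (s : Finset (Fin 8))
    (h : ∀ (i : Fin 3) (a : Fin 4), s ≠ {xi i.succ, yi a}) : F2g f x s = 0 := by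
  rw [F2g_apply]
  exact Finset.sum_eq_zero fun i _ => Finset.sum_eq_zero fun a _ => if_neg (h i a)

lemma F2_val (f : (Fin 4 → ℝ) → (Fin 4 → ℝ)) (x : Fin 4 → ℝ) (i : Fin 3) (a : Fin 4)
    (s : Finset (Fin 8)) (h : s = {xi i.succ, yi a}) : F2g f x s = pd f x i.succ a := by
  subst h
  rw [F2g_apply]
  have : ∀ (j : Fin 3) (b : Fin 4), (({xi i.succ, yi a} : Finset (Fin 8)) = {xi j.succ, yi b}) ↔
      (i = j ∧ a = b) := by revert i a; decide
  simp only [this, ite_and]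
  simp

lemma part1_coef (f : (Fin 4 → ℝ) → (Fin 4 → ℝ)) (x : Fin 4 → ℝ) (i j : Fin 3) (hij : i < j)
    (a b : Fin 4) (hab : a < b) (u : Finset (Fin 8))
    (hu : u = {xi i.succ, xi j.succ, yi a, yi b}) :
    wedge (F2g f x) (F2g f x) u =
      2 * (pd f x i.succ b * pd f x j.succ a - pd f x i.succ a * pd f x j.succ b) := by
  subst hu
  rw [wedge_F2]
  fin_cases i <;> fin_cases j <;> first | (exfalso; revert hij; decide) | skip
  all_goals
    fin_cases a <;> fin_cases b <;> first | (exfalso; revert hab; decide) | skip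
  all_goals
    simp only [Fin.sum_univ_three, Fin.sum_univ_four]
    simp +decide [F2g_apply, Fin.sum_univ_three, Fin.sum_univ_four, signMerge_even, signMerge_odd]
    ring

lemma part1_zero (f : (Fin 4 → ℝ) → (Fin 4 → ℝ)) (x : Fin 4 → ℝ) :
    wedge (F2g f x) (F2g f x) {4, 5, 6, 7} = 0 := by
  rw [wedge_F2]
  refine Finset.sum_eq_zero fun i _ => Finset.sum_eq_zero fun a _ => if_neg ?_
  revert i a; decide

lemma part1 (f : (Fin 4 → ℝ) → (Fin 4 → ℝ)) (x : Fin 4 → ℝ) :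
    evalForm phi8 ![vG f x 1, vG f x 2, vG f x 3] =
        1 - (2 : ℝ)⁻¹ * (star7 (wedge phi8 (wedge (F2g f x) (F2g f x)))) ∅ := by
  rw [evalForm_phi8]
  have hs : ∀ X : Form ℝ 8, star7 X ∅ = X Vset := by
    intro X; simp [star7, signMerge]
  rw [hs, wedge_phi_left, sum_phi8]
  rw [if_pos (by decide), if_pos (by decide), if_pos (by decide), if_pos (by decide),
    if_pos (by decide), if_pos (by decide), if_pos (by decide)]
  rw [show Vset \ {1, 2, 3} = {4, 5, 6, 7} by decide, part1_zero,
    part1_coef f x 1 2 (by decide) 2 3 (by decide) (Vset \ {1, 4, 5}) (by decide),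
    part1_coef f x 1 2 (by decide) 0 1 (by decide) (Vset \ {1, 6, 7}) (by decide),
    part1_coef f x 0 2 (by decide) 1 3 (by decide) (Vset \ {2, 4, 6}) (by decide),
    part1_coef f x 0 2 (by decide) 0 2 (by decide) (Vset \ {2, 5, 7}) (by decide),
    part1_coef f x 0 1 (by decide) 1 2 (by decide) (Vset \ {3, 4, 7}) (by decide),
    part1_coef f x 0 1 (by decide) 0 3 (by decide) (Vset \ {3, 5, 6}) (by decide)]
  simp +decide [d3, vG_eq, signMerge_even, signMerge_odd]
  ring

lemma part2_ne (f : (Fin 4 → ℝ) → (Fin 4 → ℝ)) (x : Fin 4 → ℝ) (t : Finset (Fin 8))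
    (ht : t.card ≠ 1) :
    star7 (wedge (F1g f x) (wedge (F2g f x) phi8)) t = 0 := by
  unfold star7
  split_ifs with h0
  · rfl
  · have h6 : (Vset \ t).card ≠ 6 := by
      have hsub : t ⊆ Vset := by
        have hV : ∀ k : Fin 8, k ≠ 0 → k ∈ Vset := by decide
        intro k hk
        exact hV k (by rintro rfl; exact h0 hk)
      have hc := Finset.card_sdiff_add_card_eq_card hsub
      have h7 : Vset.card = 7 := by decide
      omega
    rw [isGrade_wedge 1 (2 + 3) _ _ (grade_F1 f x)
      (isGrade_wedge 2 3 _ _ (grade_F2 f x) grade_phi8) _ h6, mul_zero]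

lemma part2 (f : (Fin 4 → ℝ) → (Fin 4 → ℝ)) (x : Fin 4 → ℝ) :
    (∑ k : Fin 3,
          evalForm phi8
            ![sharp1 (F1g f x), vG f x ((k + 1 : Fin 3)).succ, vG f x ((k + 2 : Fin 3)).succ] •
            e1 (xi k.succ)) =
        - star7 (wedge (F1g f x) (wedge (F2g f x) phi8)) := by
  funext t
  rw [Pi.neg_apply, Finset.sum_apply]
  simp only [Pi.smul_apply, smul_eq_mul, e1]
  by_cases ht : t.card = 1
  · obtain ⟨k, rfl⟩ := Finset.card_eq_one.1 ht
    simp only [evalForm_phi8, vG_eq, sharp_eq, Fin.sum_univ_three, star7, wedge_F1,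
      wedge_phi_right, sum_phi8, Finset.singleton_inj, Fin.sum_univ_four, Finset.mem_powerset]
    fin_cases k
    · simp +decide
    all_goals
      simp +decide [d3, F2g_apply, signMerge_even, signMerge_odd, Fin.sum_univ_three,
        Fin.sum_univ_four]
      try ring
  · rw [part2_ne f x t ht, neg_zero]
    refine Finset.sum_eq_zero fun k _ => ?_
    rw [if_neg, mul_zero]
    rintro rfl
    simp at ht

/-- Lemma 5.3.  At every `x ∈ B`:
`φ(v₁,v₂,v₃) = 1 - ½ *₇(φ ∧ F₂²)` and
`Σ_{k ∈ ℤ/3} φ(F₁♯, v_{k+1}, v_{k+2}) dx^k = -*₇(F₁ ∧ F₂ ∧ φ)`. -/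
theorem statement9 (B : Set (Fin 4 → ℝ)) (hB : IsOpen B)
    (f : (Fin 4 → ℝ) → (Fin 4 → ℝ)) (hf : ContDiffOn ℝ (⊤ : ℕ∞) f B) :
    ∀ x ∈ B,
      (evalForm phi8 ![vG f x 1, vG f x 2, vG f x 3] =
        1 - (2 : ℝ)⁻¹ * (star7 (wedge phi8 (wedge (F2g f x) (F2g f x)))) ∅) ∧
      ((∑ k : Fin 3,
          evalForm phi8
            ![sharp1 (F1g f x), vG f x ((k + 1 : Fin 3)).succ, vG f x ((k + 2 : Fin 3)).succ] •
            e1 (xi k.succ)) =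
        - star7 (wedge (F1g f x) (wedge (F2g f x) phi8))) := by
  intro x _
  exact ⟨part1 f x, part2 f x⟩

end FMpaper
end
end

section
/- Let F₁ ∈ span{e⁴,e⁵,e⁶,e⁷} ⊂ V* and F₂ ∈ span{e^i∧e^a : 1≤i≤3, 4≤a≤7} ⊂ Λ²V*, and set F = e⁰∧F₁ + F₂ ∈ Λ²(ℝ⁸)*. Then: (i) 2·π²₇( F − (1/6)·*₈F³ ) = λ²( *₇( *₇φ∧F₂ − (1/6)F₂³ + (1 − ½·*₇(φ∧F₂²))·*₇F₁ − *₇(F₁∧F₂∧φ) ∧ *₇F₂ ) ); and (ii) √8·π⁴₇( F² ) = λ⁴( *₇( 2·F₁∧F₂∧φ − φ∧*₇(F₂²) ) ). -/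
open scoped BigOperators

noncomputable section

namespace FMpaper

variable {K : Type*} [NormedField K] [NormedAlgebra ℝ K]

variable {n : ℕ}

/-! ### Reflection: sparse forms with integer-polynomial coefficients -/

/-- The subset of `Fin 8` encoded by a bit mask. -/
def mS (m : ℕ) : Finset (Fin 8) := Finset.univ.filter (fun i => m.testBit i.val = true)

lemma mem_mS (m : ℕ) (i : Fin 8) : i ∈ mS m ↔ m.testBit i.val = true := by simp [mS]

/-- Basis form. -/
def bF (s : Finset (Fin 8)) : Form ℝ 8 := fun t => if t = s then 1 else 0

/-- mask, monomial, coefficient -/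
abbrev RTerm := ℕ × List ℕ × ℤ

def mev (ρ : ℕ → ℝ) : List ℕ → ℝ
  | [] => 1
  | x :: l => ρ x * mev ρ l

def tden (ρ : ℕ → ℝ) (t : RTerm) : Form ℝ 8 := ((t.2.2 : ℝ) * mev ρ t.2.1) • bF (mS t.1)

def den (ρ : ℕ → ℝ) : List RTerm → Form ℝ 8
  | [] => 0
  | t :: l => tden ρ t + den ρ l

lemma den_append (ρ : ℕ → ℝ) (l k : List RTerm) : den ρ (l ++ k) = den ρ l + den ρ k := by
  induction l with
  | nil => simp [den]
  | cons t l ih => simp [den, ih, add_assoc]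

def insM (x : ℕ) : List ℕ → List ℕ
  | [] => [x]
  | y :: l => if x ≤ y then x :: y :: l else y :: insM x l

lemma mev_insM (ρ : ℕ → ℝ) (x : ℕ) (l : List ℕ) : mev ρ (insM x l) = ρ x * mev ρ l := by
  induction l with
  | nil => simp [insM, mev]
  | cons y l ih =>
    simp only [insM]
    split_ifs
    · simp [mev]
    · simp only [mev, ih]; ring

def mulM : List ℕ → List ℕ → List ℕ
  | [], k => k
  | x :: l, k => insM x (mulM l k)

lemma mev_mulM (ρ : ℕ → ℝ) (l k : List ℕ) : mev ρ (mulM l k) = mev ρ l * mev ρ k := by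
  induction l with
  | nil => simp [mulM, mev]
  | cons x l ih => simp only [mulM, mev_insM, ih, mev]; ring

/-! Forcing evaluation. -/
def fN {α : Type} (n : ℕ) (k : ℕ → α) : α :=
  match n with
  | 0 => k 0
  | m + 1 => k (m + 1)

lemma fN_eq {α : Type} (n : ℕ) (k : ℕ → α) : fN n k = k n := by cases n <;> rfl

def fZ {α : Type} (n : ℤ) (k : ℤ → α) : α :=
  match n with
  | Int.ofNat m => fN m (fun m => k (Int.ofNat m))
  | Int.negSucc m => fN m (fun m => k (Int.negSucc m))

lemma fZ_eq {α : Type} (n : ℤ) (k : ℤ → α) : fZ n k = k n := by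
  cases n <;> simp only [fZ, fN_eq]

def fL {α : Type} : List ℕ → (List ℕ → α) → α
  | [], k => k []
  | x :: l, k => fN x (fun x => fL l (fun l => k (x :: l)))

lemma fL_eq {α : Type} (l : List ℕ) (k : List ℕ → α) : fL l k = k l := by
  induction l generalizing k with
  | nil => rfl
  | cons x l ih => simp only [fL, fN_eq, ih]

def fT {α : Type} (t : RTerm) (k : RTerm → α) : α :=
  fN t.1 (fun m => fL t.2.1 (fun v => fZ t.2.2 (fun c => k (m, v, c))))

lemma fT_eq {α : Type} (t : RTerm) (k : RTerm → α) : fT t k = k t := by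
  simp only [fT, fN_eq, fL_eq, fZ_eq]

/-- Trees for normalisation. -/
inductive RTree where
  | leaf : RTree
  | node : RTree → ℕ → RTerm → RTree → RTree

def tkey (t : RTerm) : ℕ := t.2.1.foldl (fun a x => 32 * a + x + 1) 0 * 256 + t.1

def lsame : List ℕ → List ℕ → Bool
  | [], [] => true
  | x :: l, y :: k => (Nat.beq x y).and (lsame l k)
  | _, _ => false

lemma lsame_eq (l k : List ℕ) (h : lsame l k = true) : l = k := by
  induction l generalizing k with
  | nil => cases k <;> simp_all [lsame]
  | cons x l ih =>
    cases k with
    | nil => simp [lsame] at h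
    | cons y k =>
      simp only [lsame, Bool.and_eq_true] at h
      rw [Nat.eq_of_beq_eq_true h.1, ih k h.2]

/-- Insertion, written with recursors so that the kernel evaluates it quickly. -/
def RTree.ins (k : ℕ) (t : RTerm) (T : RTree) : RTree :=
  RTree.rec (motive := fun _ => RTree) (.node .leaf k t .leaf)
    (fun l k' u r il ir =>
      Bool.rec (Bool.rec (Bool.rec (.node l k' u ir) (.node l k' (u.1, u.2.1, t.2.2 + u.2.2) r)
            ((Nat.beq t.1 u.1).and (lsame t.2.1 u.2.1)))
          (.node l k' u ir) (Nat.ble (Nat.succ k') k))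
        (.node il k' u r) (Nat.ble (Nat.succ k) k')) T

lemma RTree.ins_node (k : ℕ) (t : RTerm) (l : RTree) (k' : ℕ) (u : RTerm) (r : RTree) :
    RTree.ins k t (.node l k' u r) =
      bif Nat.ble (Nat.succ k) k' then .node (RTree.ins k t l) k' u r
      else bif Nat.ble (Nat.succ k') k then .node l k' u (RTree.ins k t r)
      else bif (Nat.beq t.1 u.1).and (lsame t.2.1 u.2.1) then
        .node l k' (u.1, u.2.1, t.2.2 + u.2.2) r
      else .node l k' u (RTree.ins k t r) := by
  cases h1 : Nat.ble (Nat.succ k) k' <;> cases h2 : Nat.ble (Nat.succ k') k <;>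
    cases h3 : (Nat.beq t.1 u.1).and (lsame t.2.1 u.2.1) <;>
    simp only [RTree.ins, h1, h2, h3, cond_true, cond_false]

def RTree.den (ρ : ℕ → ℝ) : RTree → Form ℝ 8
  | .leaf => 0
  | .node l _ u r => RTree.den ρ l + (tden ρ u + RTree.den ρ r)

lemma RTree.den_ins (ρ : ℕ → ℝ) (k : ℕ) (t : RTerm) (T : RTree) :
    RTree.den ρ (RTree.ins k t T) = tden ρ t + RTree.den ρ T := by
  induction T with
  | leaf => simp [RTree.ins, RTree.den]
  | node l k' u r ihl ihr =>
    rw [RTree.ins_node]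
    cases h1 : Nat.ble (Nat.succ k) k'
    · cases h2 : Nat.ble (Nat.succ k') k
      · cases h3 : (Nat.beq t.1 u.1).and (lsame t.2.1 u.2.1)
        · simp only [cond_false, RTree.den, ihr]; abel
        · rw [Bool.and_eq_true] at h3
          have e1 := Nat.eq_of_beq_eq_true h3.1
          have e2 := lsame_eq _ _ h3.2
          have : tden ρ (u.1, u.2.1, t.2.2 + u.2.2) = tden ρ t + tden ρ u := by
            simp only [tden, e1, e2]
            rw [← add_smul]; push_cast; congr 1; ring
          simp only [cond_false, cond_true, RTree.den, this]; abel
      · simp only [cond_false, cond_true, RTree.den, ihr]; abel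
    · simp only [cond_true, RTree.den, ihl]; abel

def RTree.toL : RTree → List RTerm → List RTerm
  | .leaf, acc => acc
  | .node l _ u r, acc => RTree.toL l (fT u (fun u => if u.2.2 = 0 then RTree.toL r acc else u :: RTree.toL r acc))

lemma RTree.den_toL (ρ : ℕ → ℝ) (T : RTree) (acc : List RTerm) :
    FMpaper.den ρ (RTree.toL T acc) = RTree.den ρ T + FMpaper.den ρ acc := by
  induction T generalizing acc with
  | leaf => simp [RTree.toL, RTree.den]
  | node l k' u r ihl ihr =>
    simp only [RTree.toL, ihl, RTree.den, fT_eq]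
    split_ifs with h
    · rw [ihr]; simp [tden, h, add_assoc]
    · simp only [FMpaper.den, ihr]; abel

def buildT (l : List RTerm) : RTree :=
  l.foldl (fun T t => fT t (fun t => fN (tkey t) (fun k => RTree.ins k t T))) .leaf

lemma den_buildT (ρ : ℕ → ℝ) (l : List RTerm) : RTree.den ρ (buildT l) = den ρ l := by
  have : ∀ T : RTree, RTree.den ρ
      (l.foldl (fun T t => fT t (fun t => fN (tkey t) (fun k => RTree.ins k t T))) T) =
      RTree.den ρ T + den ρ l := by
    induction l with
    | nil => simp [den]
    | cons t l ih =>
      intro T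
      rw [List.foldl_cons, ih, fT_eq, fN_eq, RTree.den_ins, den]
      abel
  rw [buildT, this]; simp [RTree.den]

def nrm (l : List RTerm) : List RTerm := RTree.toL (buildT l) []

lemma den_nrm (ρ : ℕ → ℝ) (l : List RTerm) : den ρ (nrm l) = den ρ l := by
  simp [nrm, RTree.den_toL, den_buildT, den]

/-- Scalar multiplication by an integer times a monomial. -/
def scl (c : ℤ) (v : List ℕ) : List RTerm → List RTerm
  | [] => []
  | t :: l => (t.1, mulM v t.2.1, c * t.2.2) :: scl c v l

lemma den_scl (ρ : ℕ → ℝ) (c : ℤ) (v : List ℕ) (l : List RTerm) :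
    den ρ (scl c v l) = ((c : ℝ) * mev ρ v) • den ρ l := by
  induction l with
  | nil => simp [scl, den]
  | cons t l ih =>
    simp only [scl, den, ih, smul_add, tden, mev_mulM, smul_smul]
    congr 2; push_cast; ring

def fP {α : Type} (p : ℕ × ℤ) (k : ℕ → ℤ → α) : α :=
  match p with
  | (m, c) => fN m (fun m => fZ c (fun c => k m c))

lemma fP_eq {α : Type} (p : ℕ × ℤ) (k : ℕ → ℤ → α) : fP p k = k p.1 p.2 := by
  simp only [fP, fN_eq, fZ_eq]

/-- Linear extension. -/
def lin (b : ℕ → ℕ × ℤ) (l : List RTerm) : List RTerm :=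
  List.rec (motive := fun _ => List RTerm) []
    (fun t _ acc => fP (b t.1) (fun m c =>
      bif Nat.beq (Int.natAbs c) 0 then acc else (m, t.2.1, c * t.2.2) :: acc)) l

lemma lin_cons (b : ℕ → ℕ × ℤ) (t : RTerm) (l : List RTerm) :
    lin b (t :: l) = if (b t.1).2 = 0 then lin b l
      else ((b t.1).1, t.2.1, (b t.1).2 * t.2.2) :: lin b l := by
  have : lin b (t :: l) = fP (b t.1) (fun m c =>
      bif Nat.beq (Int.natAbs c) 0 then lin b l else (m, t.2.1, c * t.2.2) :: lin b l) := rfl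
  rw [this, fP_eq]
  by_cases h : (b t.1).2 = 0
  · simp [h]
  · have h2 : Nat.beq (Int.natAbs (b t.1).2) 0 = false := by
      rw [← Bool.not_eq_true]; intro h3
      exact h (Int.natAbs_eq_zero.1 (Nat.eq_of_beq_eq_true h3))
    simp only [h2, h, cond_false, if_false]

lemma den_lin (ρ : ℕ → ℝ) (W : Form ℝ 8 →ₗ[ℝ] Form ℝ 8) (b : ℕ → ℕ × ℤ)
    (h : ∀ m, W (bF (mS m)) = ((b m).2 : ℝ) • bF (mS (b m).1)) (l : List RTerm) :
    W (den ρ l) = den ρ (lin b l) := by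
  induction l with
  | nil => exact map_zero W
  | cons t l ih =>
    simp only [den, lin_cons, map_add, ih, tden, map_smul, h]
    split_ifs with h0
    · simp [h0]
    · simp only [den, tden, smul_smul]
      congr 2; push_cast; ring

/-- Bilinear extension. -/
def bil (b : ℕ → ℕ → ℕ × ℤ) : List RTerm → List RTerm → List RTerm
  | [], _ => []
  | t :: l, k => scl t.2.2 t.2.1 (lin (b t.1) k) ++ bil b l k

lemma den_bil (ρ : ℕ → ℝ) (W : Form ℝ 8 →ₗ[ℝ] Form ℝ 8 →ₗ[ℝ] Form ℝ 8) (b : ℕ → ℕ → ℕ × ℤ)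
    (h : ∀ m n, W (bF (mS m)) (bF (mS n)) = ((b m n).2 : ℝ) • bF (mS (b m n).1))
    (l k : List RTerm) :
    W (den ρ l) (den ρ k) = den ρ (bil b l k) := by
  induction l with
  | nil => simp [bil, den]
  | cons t l ih =>
    simp only [den, bil, map_add, den_append, LinearMap.add_apply, ih, tden, map_smul, den_scl,
      LinearMap.smul_apply]
    rw [den_lin ρ (W (bF (mS t.1))) (b t.1) (h t.1)]

/-! Signs -/

def bt (a i : ℕ) : ℕ := (a.testBit i).toNat

def lowc (b : ℕ) : ℕ → ℕ
  | 0 => 0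
  | i + 1 => bt b i + lowc b i

def cntI (a b : ℕ) : ℕ → ℕ
  | 0 => 0
  | i + 1 => (bif a.testBit i then lowc b i else 0) + cntI a b i

def sgn (a b : ℕ) : ℤ := if cntI a b 8 % 2 = 0 then 1 else -1

lemma pow_sgn (n : ℕ) : (-1 : ℝ) ^ n = ((if n % 2 = 0 then 1 else -1 : ℤ) : ℝ) := by
  split_ifs with h
  · rw [Even.neg_one_pow (Nat.even_iff.2 h)]; simp
  · rw [Odd.neg_one_pow (Nat.odd_iff.2 (by omega))]; simp

lemma signMerge_mS (a b : ℕ) : (signMerge (mS a) (mS b) : ℝ) = (sgn a b : ℝ) := by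
  unfold signMerge sgn
  rw [pow_sgn]
  have : (((mS a ×ˢ mS b).filter (fun p => p.2 < p.1)).card) = cntI a b 8 := by
    rw [Finset.card_filter, Finset.sum_product]
    simp only [mS, Finset.sum_filter]
    simp only [Fin.sum_univ_eight]
    simp only [cntI, lowc, bt]
    have hb : ∀ (x : Bool) (n : ℕ), (if x = true then n else 0) = bif x then n else 0 := by
      intro x n; cases x <;> rfl
    have hb1 : ∀ (x : Bool), (bif x then 1 else 0) = x.toNat := by
      intro x; cases x <;> rfl
    simp +decide [hb, hb1, -Nat.testBit_zero]
    ring_nf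
  rw [this]

/-! Basic operations -/

lemma not_disj_mS (a b : ℕ) (h : (a &&& b) % 256 ≠ 0) : ¬ Disjoint (mS a) (mS b) := by
  intro hd
  apply h
  apply Nat.eq_of_testBit_eq
  intro i
  rw [show 256 = 2 ^ 8 by norm_num, Nat.testBit_mod_two_pow, Nat.testBit_and]
  by_cases hi : i < 8
  · have : (⟨i, hi⟩ : Fin 8) ∈ mS a → (⟨i, hi⟩ : Fin 8) ∉ mS b := fun h => Finset.disjoint_left.1 hd h
    simp only [mem_mS] at this
    cases h1 : a.testBit i <;> simp_all
  · simp [hi]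

lemma mS_mod (a : ℕ) : mS (a % 256) = mS a := by
  ext i
  rw [mem_mS, mem_mS, show 256 = 2 ^ 8 by norm_num, Nat.testBit_mod_two_pow]
  simp [i.isLt]

lemma disj_mS_iff (a b : ℕ) : Disjoint (mS a) (mS b) ↔ (a &&& b) % 256 = 0 := by
  constructor
  · intro h; by_contra h'; exact not_disj_mS a b h' h
  · intro h
    rw [Finset.disjoint_left]
    intro i hi hj
    rw [mem_mS] at hi hj
    have h2 : i ∈ mS (a &&& b) := by rw [mem_mS, Nat.testBit_and, hi, hj]; rfl
    rw [← mS_mod, h, mem_mS] at h2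
    simp at h2

lemma mS_or (a b : ℕ) : mS (a ||| b) = mS a ∪ mS b := by
  ext i; simp [mem_mS]

lemma wedge_bF (s t : Finset (Fin 8)) :
    wedge (bF s) (bF t) = if Disjoint s t then (signMerge s t : ℝ) • bF (s ∪ t) else 0 := by
  funext u
  unfold wedge bF
  have key : ∀ x ∈ u.powerset, (signMerge x (u \ x) : ℝ) * (if x = s then 1 else 0) *
      (if u \ x = t then 1 else 0) =
      if x = s then (if u \ s = t then signMerge s t else 0) else 0 := by
    intro x _
    by_cases hx : x = s
    · subst hx
      by_cases h2 : u \ x = t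
      · subst h2; simp
      · simp [h2]
    · simp [hx]
  rw [Finset.sum_congr rfl key, Finset.sum_ite_eq']
  by_cases hd : Disjoint s t
  · simp only [hd, if_true, Pi.smul_apply, smul_eq_mul, Finset.mem_powerset]
    by_cases hu : u = s ∪ t
    · subst hu
      simp [Finset.union_sdiff_cancel_left hd]
    · simp only [hu, if_false, mul_zero]
      by_cases h1 : s ⊆ u
      · have : u \ s ≠ t := by
          intro h; apply hu; rw [← h, Finset.union_sdiff_of_subset h1]
        simp [this]
      · simp [h1]
  · simp only [hd, if_false, Pi.zero_apply]
    have : u \ s ≠ t := by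
      intro h; apply hd; rw [← h]; exact Finset.disjoint_sdiff
    simp [this]

def wL : Form ℝ 8 →ₗ[ℝ] Form ℝ 8 →ₗ[ℝ] Form ℝ 8 :=
  LinearMap.mk₂ ℝ wedge
    (by intro a b c; funext u; simp only [wedge, Pi.add_apply, ← Finset.sum_add_distrib]
        exact Finset.sum_congr rfl (fun _ _ => by ring))
    (by intro a b c; funext u; simp only [wedge, Pi.smul_apply, smul_eq_mul, Finset.mul_sum]
        exact Finset.sum_congr rfl (fun _ _ => by ring))
    (by intro a b c; funext u; simp only [wedge, Pi.add_apply, ← Finset.sum_add_distrib]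
        exact Finset.sum_congr rfl (fun _ _ => by ring))
    (by intro a b c; funext u; simp only [wedge, Pi.smul_apply, smul_eq_mul, Finset.mul_sum]
        exact Finset.sum_congr rfl (fun _ _ => by ring))

def wB (a b : ℕ) : ℕ × ℤ := if (a &&& b) % 256 = 0 then (a ||| b, sgn a b) else (0, 0)

def wR (f g : List RTerm) : List RTerm := nrm (bil wB f g)

lemma den_wR (ρ : ℕ → ℝ) (f g : List RTerm) : wedge (den ρ f) (den ρ g) = den ρ (wR f g) := by
  rw [wR, den_nrm, ← den_bil ρ wL wB _ f g]
  · rfl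
  · intro m n
    change wedge _ _ = _
    rw [wedge_bF, wB]
    simp only [disj_mS_iff]
    split_ifs
    · simp [mS_or, signMerge_mS]
    · simp

def hL : Form ℝ 8 →ₗ[ℝ] Form ℝ 8 where
  toFun := hstar
  map_add' a b := by funext u; simp [hstar, mul_add]
  map_smul' a b := by funext u; simp [hstar]; ring

def hB (a : ℕ) : ℕ × ℤ := (255 ^^^ a, sgn a (255 ^^^ a))
def hR (f : List RTerm) : List RTerm := nrm (lin hB f)

lemma tb255 (i : Fin 8) : Nat.testBit 255 i.val = true := by revert i; decide
lemma tb254 (i : Fin 8) : Nat.testBit 254 i.val = decide (i ∈ Vset) := by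
  revert i; unfold Vset; decide

lemma mS_compl (a : ℕ) : mS (255 ^^^ a) = (mS a)ᶜ := by
  ext i; simp [mem_mS, Nat.testBit_xor, tb255]

lemma den_hR (ρ : ℕ → ℝ) (f : List RTerm) : hstar (den ρ f) = den ρ (hR f) := by
  rw [hR, den_nrm, ← den_lin ρ hL hB _ f]
  · rfl
  · intro m
    change hstar _ = _
    simp only [hB]
    rw [← signMerge_mS, mS_compl]
    funext t
    simp only [hstar, bF, Pi.smul_apply, smul_eq_mul]
    by_cases h : tᶜ = mS m
    · rw [← h]; simp
    · have : t ≠ (mS m)ᶜ := by rintro rfl; simp at h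
      simp [h, this]

def sL : Form ℝ 8 →ₗ[ℝ] Form ℝ 8 where
  toFun := star7
  map_add' a b := by funext u; simp only [star7, Pi.add_apply]; split_ifs <;> ring
  map_smul' a b := by
    funext u; simp only [star7, Pi.smul_apply, smul_eq_mul, RingHom.id_apply]; split_ifs <;> ring

def sB (a : ℕ) : ℕ × ℤ := if a.testBit 0 = true then (0, 0) else (254 ^^^ a, sgn a (254 ^^^ a))
def sR (f : List RTerm) : List RTerm := nrm (lin sB f)

lemma mem_Vset (i : Fin 8) : i ∈ Vset ↔ i ≠ 0 := by revert i; unfold Vset; decide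

lemma mS_Vset (a : ℕ) (h : ¬ a.testBit 0 = true) : mS (254 ^^^ a) = Vset \ mS a := by
  ext i
  simp only [mem_mS, Nat.testBit_xor, tb254, Finset.mem_sdiff, mem_Vset]
  by_cases hi : i = 0
  · subst hi; simp at h ⊢; simp [h]
  · simp [hi]

lemma den_sR (ρ : ℕ → ℝ) (f : List RTerm) : star7 (den ρ f) = den ρ (sR f) := by
  rw [sR, den_nrm, ← den_lin ρ sL sB _ f]
  · rfl
  · intro m
    change star7 _ = _
    simp only [sB]
    split_ifs with h0
    · funext t
      have h0' : (0 : Fin 8) ∈ mS m := by rw [mem_mS]; exact h0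
      have : Vset \ t ≠ mS m := by
        intro h; rw [← h] at h0'; simp [mem_Vset] at h0'
      simp [star7, bF, this]
    · rw [← signMerge_mS, mS_Vset m h0]
      have h0' : (0 : Fin 8) ∉ mS m := by rw [mem_mS]; exact h0
      funext t
      simp only [star7, bF, Pi.smul_apply, smul_eq_mul]
      have hV : mS m ⊆ Vset := by
        intro i hi; rw [mem_Vset]; rintro rfl; exact h0' hi
      by_cases ht : (0 : Fin 8) ∈ t
      · have : t ≠ Vset \ mS m := by rintro rfl; simp [mem_Vset] at ht
        simp [ht, this]
      · have htV : t ⊆ Vset := by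
          intro i hi; rw [mem_Vset]; rintro rfl; exact ht hi
        by_cases h : Vset \ t = mS m
        · rw [← h, Finset.sdiff_sdiff_eq_self htV]; simp [ht]
        · have : t ≠ Vset \ mS m := by
            rintro rfl; exact h (Finset.sdiff_sdiff_eq_self hV)
          simp [ht, h, this]

/-! equality of masks -/
lemma mS_eq_iff (a b : ℕ) : mS a = mS b ↔ a % 256 = b % 256 := by
  constructor
  · intro h
    apply Nat.eq_of_testBit_eq
    intro i
    rw [show 256 = 2 ^ 8 by norm_num, Nat.testBit_mod_two_pow, Nat.testBit_mod_two_pow]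
    by_cases hi : i < 8
    · have := mem_mS a ⟨i, hi⟩
      rw [h, mem_mS] at this
      simp only [hi, decide_true, Bool.true_and]
      exact (Bool.eq_iff_iff.2 this).symm
    · simp [hi]
  · intro h; rw [← mS_mod a, h, mS_mod]

lemma mS_zero : mS 0 = ∅ := by ext i; simp [mem_mS]

/-- `(f ∅) • g` -/
def eL : Form ℝ 8 →ₗ[ℝ] Form ℝ 8 →ₗ[ℝ] Form ℝ 8 :=
  LinearMap.mk₂ ℝ (fun f g => f ∅ • g)
    (by intro a b c; simp [add_smul]) (by intro a b c; simp [smul_smul])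
    (by intro a b c; simp) (by intro a b c; simp [smul_smul, mul_comm])

def eB (a b : ℕ) : ℕ × ℤ := if a % 256 = 0 then (b, 1) else (0, 0)
def eR (f g : List RTerm) : List RTerm := nrm (bil eB f g)

lemma den_eR (ρ : ℕ → ℝ) (f g : List RTerm) : (den ρ f) ∅ • (den ρ g) = den ρ (eR f g) := by
  rw [eR, den_nrm, ← den_bil ρ eL eB _ f g]
  · rfl
  · intro m n
    change bF _ ∅ • bF _ = _
    simp only [eB, bF]
    have h1 : (∅ : Finset (Fin 8)) = mS m ↔ m % 256 = 0 := by
      rw [← mS_zero, mS_eq_iff, Nat.zero_mod, eq_comm]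
    simp only [h1]
    split_ifs <;> simp

/-- inner product as a form of degree 0 -/
def iL : Form ℝ 8 →ₗ[ℝ] Form ℝ 8 →ₗ[ℝ] Form ℝ 8 :=
  LinearMap.mk₂ ℝ (fun f g => inner' f g • bF ∅)
    (by intro a b c; rw [← add_smul]; congr 1
        simp [inner', add_mul, Finset.sum_add_distrib])
    (by intro a b c; rw [smul_smul]; congr 1
        simp [inner', Finset.mul_sum, mul_assoc])
    (by intro a b c; rw [← add_smul]; congr 1
        simp [inner', mul_add, Finset.sum_add_distrib])
    (by intro a b c; rw [smul_smul]; congr 1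
        simp [inner', Finset.mul_sum, mul_left_comm])

def iB (a b : ℕ) : ℕ × ℤ := if a % 256 = b % 256 then (0, 1) else (0, 0)
def iR (f g : List RTerm) : List RTerm := nrm (bil iB f g)

lemma den_iR (ρ : ℕ → ℝ) (f g : List RTerm) :
    inner' (den ρ f) (den ρ g) • bF ∅ = den ρ (iR f g) := by
  rw [iR, den_nrm, ← den_bil ρ iL iB _ f g]
  · rfl
  · intro m n
    change (inner' (bF (mS m)) (bF (mS n)) : ℝ) • bF ∅ = _
    have : (inner' (bF (mS m)) (bF (mS n)) : ℝ) = if mS m = mS n then (1 : ℝ) else 0 := by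
      simp [inner', bF, eq_comm]
    simp only [this, mS_eq_iff, iB]
    split_ifs <;> simp [mS_zero]

lemma den_ieR (ρ : ℕ → ℝ) (f g h : List RTerm) :
    inner' (den ρ f) (den ρ g) • den ρ h = den ρ (eR (iR f g) h) := by
  rw [← den_eR, ← den_iR]
  simp [bF]

/-- interior product -/
def pL : Form ℝ 8 →ₗ[ℝ] Form ℝ 8 →ₗ[ℝ] Form ℝ 8 :=
  LinearMap.mk₂ ℝ (fun f g => iprod (sharp1 f) g)
    (by intro a b c; funext u; simp [iprod, sharp1, add_mul, Finset.sum_add_distrib])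
    (by intro a b c; funext u; simp [iprod, sharp1, Finset.mul_sum, mul_assoc])
    (by intro a b c; funext u
        simp only [iprod, iprodB, Pi.add_apply, ← Finset.sum_add_distrib]
        exact Finset.sum_congr rfl (fun _ _ => by split_ifs <;> ring))
    (by intro a b c; funext u
        simp only [iprod, iprodB, Pi.smul_apply, smul_eq_mul, Finset.mul_sum]
        exact Finset.sum_congr rfl (fun _ _ => by split_ifs <;> ring))

def pIdx (a : ℕ) : ℕ → Option ℕ
  | 0 => none
  | i + 1 => if a % 256 = 2 ^ i then some i else pIdx a i

def pB (a b : ℕ) : ℕ × ℤ :=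
  match pIdx a 8 with
  | none => (0, 0)
  | some i => if b.testBit i = true then
      (b ^^^ a, if lowc (b ^^^ a) i % 2 = 0 then 1 else -1) else (0, 0)
def pR (f g : List RTerm) : List RTerm := nrm (bil pB f g)

lemma mS_pow (i : Fin 8) : mS (2 ^ i.val) = {i} := by revert i; decide +kernel

lemma pIdx_some (a i n : ℕ) (hn : n ≤ 8) (h : pIdx a n = some i) :
    ∃ hi : i < 8, mS a = {⟨i, hi⟩} := by
  induction n with
  | zero => simp [pIdx] at h
  | succ n ih =>
    simp only [pIdx] at h
    split_ifs at h with h1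
    · simp at h; subst h
      refine ⟨by omega, ?_⟩
      rw [← mS_mod, h1]; exact mS_pow ⟨n, by omega⟩
    · exact ih (by omega) h

lemma pIdx_none (a n : ℕ) (hn : n ≤ 8) (h : pIdx a n = none) (i : Fin 8) (hi : i.val < n) :
    mS a ≠ {i} := by
  induction n with
  | zero => omega
  | succ n ih =>
    simp only [pIdx] at h
    split_ifs at h with h1
    by_cases hin : i.val = n
    · rw [← mS_pow, Ne, mS_eq_iff]
      intro h2; apply h1; rw [h2, hin]
      apply Nat.mod_eq_of_lt
      calc 2 ^ n < 2 ^ 8 := Nat.pow_lt_pow_right (by norm_num) (by omega)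
        _ = 256 := by norm_num
    · exact ih (by omega) h (by omega)

lemma card_low (b : ℕ) (i : Fin 8) :
    ((mS b).filter (fun j => j < i)).card = lowc b i.val := by
  have hb1 : ∀ (x : Bool), (if x = true then 1 else 0) = x.toNat := by
    intro x; cases x <;> rfl
  rw [Finset.card_filter]
  simp only [mS, Finset.sum_filter, Fin.sum_univ_eight]
  fin_cases i <;> simp +decide [lowc, bt, hb1, -Nat.testBit_zero] <;> ring

lemma den_pR (ρ : ℕ → ℝ) (f g : List RTerm) :
    iprod (sharp1 (den ρ f)) (den ρ g) = den ρ (pR f g) := by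
  rw [pR, den_nrm, ← den_bil ρ pL pB _ f g]
  · rfl
  · intro m n
    change iprod (sharp1 (bF _)) _ = _
    unfold pB
    cases h : pIdx m 8 with
    | none =>
      funext t
      have : ∀ i : Fin 8, sharp1 (bF (mS m)) i = 0 := by
        intro i
        have := (pIdx_none m 8 le_rfl h i i.isLt).symm
        simp [sharp1, bF, this]
      simp [iprod, this]
    | some i =>
      obtain ⟨hi, hm⟩ := pIdx_some m i 8 le_rfl h
      generalize hj : (⟨i, hi⟩ : Fin 8) = j at hm
      have hij : i = j.val := by rw [← hj]
      subst hij
      funext t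
      have h1 : ∀ k : Fin 8, sharp1 (bF (mS m)) k = if k = j then 1 else 0 := by
        intro k; simp [sharp1, bF, hm]
      simp only [iprod, h1, ite_mul, one_mul, zero_mul, Finset.sum_ite_eq', Finset.mem_univ,
        if_true, iprodB]
      have hmem := mem_mS n j
      have hx : n.testBit j.val = true → mS (n ^^^ m) = (mS n).erase j := by
        intro hn
        ext k
        have hk := mem_mS m k
        rw [hm, Finset.mem_singleton] at hk
        rw [mem_mS, Nat.testBit_xor, Finset.mem_erase, mem_mS]
        by_cases hkj : k = j
        · subst hkj; simp [hn, hk.1 rfl]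
        · have : m.testBit k.val = false := by
            rw [← Bool.not_eq_true]; exact fun h => hkj (hk.2 h)
          simp [this, hkj]
      by_cases hn : n.testBit j.val = true
      · simp only [hn, if_true, Pi.smul_apply, smul_eq_mul, bF]
        rw [← pow_sgn, ← card_low, hx hn]
        have hjn : j ∈ mS n := hmem.2 hn
        by_cases ht : t = (mS n).erase j
        · subst ht; simp [Finset.insert_erase hjn]
        · simp only [ht, if_false, mul_zero]
          by_cases hjt : j ∈ t
          · simp [hjt]
          · have : insert j t ≠ mS n := by
              intro h; apply ht; rw [← h, Finset.erase_insert hjt]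
            simp [hjt, this]
      · have hjn : j ∉ mS n := fun h => hn (hmem.1 h)
        have : insert j t ≠ mS n := by
          intro h; apply hjn; rw [← h]; simp
        simp [hn, bF, this]

lemma den_add (ρ : ℕ → ℝ) (f g : List RTerm) : den ρ f + den ρ g = den ρ (f ++ g) :=
  (den_append ρ f g).symm

lemma den_sub (ρ : ℕ → ℝ) (f g : List RTerm) : den ρ f - den ρ g = den ρ (f ++ scl (-1) [] g) := by
  rw [den_append, den_scl]; simp [mev, sub_eq_add_neg]

/-! Concrete data -/

def phiR : List RTerm := [(14, [], 1), (50, [], 1), (194, [], 1), (84, [], 1),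
  (164, [], -1), (152, [], -1), (104, [], -1)]
def psiR : List RTerm := [(240, [], 1), (204, [], 1), (60, [], 1), (170, [], 1),
  (90, [], -1), (102, [], -1), (150, [], -1)]
def F1R : List RTerm := [(16, [0], 1), (32, [1], 1), (64, [2], 1), (128, [3], 1)]
def F2R : List RTerm := [(18, [4], 1), (34, [5], 1), (66, [6], 1), (130, [7], 1),
  (20, [8], 1), (36, [9], 1), (68, [10], 1), (132, [11], 1),
  (24, [12], 1), (40, [13], 1), (72, [14], 1), (136, [15], 1)]
def eeR (i : ℕ) : List RTerm := [(2 ^ i, [], 1)]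
def PhiR : List RTerm := wR (eeR 0) phiR ++ psiR
def FR : List RTerm := wR (eeR 0) F1R ++ F2R

/-- `2 λ²` -/
def l2R (a : List RTerm) : List RTerm := wR (eeR 0) a ++ pR a phiR
/-- `√8 λ⁴` -/
def l4R (a : List RTerm) : List RTerm := wR (eeR 0) (pR a psiR) ++ scl (-1) [] (wR a phiR)

def A1 : List RTerm := nrm (FR ++ scl (-1) [] (scl 1 [16] (hR (wR FR (wR FR FR)))))
def lhs1 : List RTerm := A1 ++ hR (wR PhiR A1)
def rhs1 : List RTerm := l2R (sR (wR psiR F2R ++ scl (-1) [] (scl 1 [16] (wR F2R (wR F2R F2R)))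
  ++ (sR F1R ++ scl (-1) [] (scl 3 [16] (eR (sR (wR phiR (wR F2R F2R))) (sR F1R))))
  ++ scl (-1) [] (scl 6 [16] (wR (sR (wR F1R (wR F2R phiR))) (sR F2R)))))

def FFR : List RTerm := wR FR FR
def p4R (β : List RTerm) (i : ℕ) : List RTerm := eR (iR β (l4R (eeR i))) (l4R (eeR i))
def lhs2 : List RTerm := p4R FFR 1 ++ p4R FFR 2 ++ p4R FFR 3 ++ p4R FFR 4 ++ p4R FFR 5 ++
  p4R FFR 6 ++ p4R FFR 7
def rhs2 : List RTerm := l4R (sR (scl 2 [] (wR F1R (wR F2R phiR)) ++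
  scl (-1) [] (wR phiR (sR (wR F2R F2R)))))

def chk (f g : List RTerm) : Bool := (nrm (f ++ scl (-1) [] g)).isEmpty

lemma chk_sound (ρ : ℕ → ℝ) (f g : List RTerm) (h : chk f g = true) : den ρ f = den ρ g := by
  have h1 : nrm (f ++ scl (-1) [] g) = [] := List.isEmpty_iff.1 h
  have h2 : den ρ f - den ρ g = 0 := by
    rw [den_sub, ← den_nrm, h1]; rfl
  exact sub_eq_zero.1 h2

lemma chk1 : chk lhs1 rhs1 = true := by decide +kernel

lemma chk2 : chk lhs2 rhs2 = true := by decide +kernel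

lemma mS14 : mS 14 = {1, 2, 3} := by decide +kernel

lemma e1_den (ρ : ℕ → ℝ) (i : Fin 8) : (e1 i : Form ℝ 8) = den ρ (eeR i.val) := by
  funext s
  simp [den, eeR, tden, mev, mS_pow, e1, bF]

lemma den_phi (ρ : ℕ → ℝ) : (phi8 : Form ℝ 8) = den ρ phiR := by
  funext s
  have h1 : mS 14 = {1, 2, 3} := by decide +kernel
  have h2 : mS 50 = {1, 4, 5} := by decide +kernel
  have h3 : mS 194 = {1, 6, 7} := by decide +kernel
  have h4 : mS 84 = {2, 4, 6} := by decide +kernel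
  have h5 : mS 164 = {2, 5, 7} := by decide +kernel
  have h6 : mS 152 = {3, 4, 7} := by decide +kernel
  have h7 : mS 104 = {3, 5, 6} := by decide +kernel
  simp only [den, phiR, tden, mev, phi8, bF, h1, h2, h3, h4, h5, h6, h7, Pi.add_apply,
    Pi.smul_apply, smul_eq_mul, Pi.zero_apply]
  by_cases a1 : s = {1, 2, 3}
  · subst a1; simp +decide
  by_cases a2 : s = {1, 4, 5}
  · subst a2; simp +decide
  by_cases a3 : s = {1, 6, 7}
  · subst a3; simp +decide
  by_cases a4 : s = {2, 4, 6}
  · subst a4; simp +decide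
  by_cases a5 : s = {2, 5, 7}
  · subst a5; simp +decide
  by_cases a6 : s = {3, 4, 7}
  · subst a6; simp +decide
  by_cases a7 : s = {3, 5, 6}
  · subst a7; simp +decide
  simp [a1, a2, a3, a4, a5, a6, a7]

lemma den_psi (ρ : ℕ → ℝ) : (psi8 : Form ℝ 8) = den ρ psiR := by
  funext s
  have h1 : mS 240 = {4, 5, 6, 7} := by decide +kernel
  have h2 : mS 204 = {2, 3, 6, 7} := by decide +kernel
  have h3 : mS 60 = {2, 3, 4, 5} := by decide +kernel
  have h4 : mS 170 = {1, 3, 5, 7} := by decide +kernel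
  have h5 : mS 90 = {1, 3, 4, 6} := by decide +kernel
  have h6 : mS 102 = {1, 2, 5, 6} := by decide +kernel
  have h7 : mS 150 = {1, 2, 4, 7} := by decide +kernel
  simp only [den, psiR, tden, mev, psi8, bF, h1, h2, h3, h4, h5, h6, h7, Pi.add_apply,
    Pi.smul_apply, smul_eq_mul, Pi.zero_apply]
  by_cases a1 : s = {4, 5, 6, 7}
  · subst a1; simp +decide
  by_cases a2 : s = {2, 3, 6, 7}
  · subst a2; simp +decide
  by_cases a3 : s = {2, 3, 4, 5}
  · subst a3; simp +decide
  by_cases a4 : s = {1, 3, 5, 7}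
  · subst a4; simp +decide
  by_cases a5 : s = {1, 3, 4, 6}
  · subst a5; simp +decide
  by_cases a6 : s = {1, 2, 5, 6}
  · subst a6; simp +decide
  by_cases a7 : s = {1, 2, 4, 7}
  · subst a7; simp +decide
  simp [a1, a2, a3, a4, a5, a6, a7]

/-- Masks of the variables. -/
def vmask (k : ℕ) : ℕ := 2 ^ (k % 4 + 4) + (if k < 4 then 0 else 2 ^ (k / 4))

def rho (F₁ F₂ : Form ℝ 8) (k : ℕ) : ℝ :=
  if k < 4 then F₁ (mS (vmask k)) else if k < 16 then F₂ (mS (vmask k)) else 6⁻¹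

/-- A form supported on a list of distinct masks. -/
lemma den_supp (ρ : ℕ → ℝ) (f : Form ℝ 8) (ks : List ℕ)
    (hnd : (ks.map (fun k => vmask k % 256)).Nodup)
    (hρ : ∀ k ∈ ks, ρ k = f (mS (vmask k)))
    (s : Finset (Fin 8)) :
    den ρ (ks.map (fun k => (vmask k, [k], 1))) s =
      if ∃ k ∈ ks, s = mS (vmask k) then f s else 0 := by
  induction ks with
  | nil => simp [den]
  | cons k ks ih =>
    simp only [List.map_cons, List.nodup_cons] at hnd
    have ih' := ih hnd.2 (fun j hj => hρ j (List.mem_cons_of_mem _ hj))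
    simp only [List.map_cons, den, Pi.add_apply, ih', tden, mev, Pi.smul_apply, smul_eq_mul, bF]
    by_cases h : s = mS (vmask k)
    · subst h
      have h1 : ¬ ∃ j ∈ ks, mS (vmask k) = mS (vmask j) := by
        rintro ⟨j, hj, h2⟩
        rw [mS_eq_iff] at h2
        exact hnd.1 (List.mem_map.2 ⟨j, hj, h2.symm⟩)
      simp [h1, hρ k (List.mem_cons_self)]
    · simp [h]

lemma F1_den (F₁ F₂ : Form ℝ 8)
    (hF1 : ∀ s, F₁ s ≠ 0 → ∃ a : Fin 4, s = {yi a}) : F₁ = den (rho F₁ F₂) F1R := by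
  funext s
  have h0 : F1R = [0, 1, 2, 3].map (fun k => (vmask k, [k], 1)) := by decide +kernel
  rw [h0, den_supp (rho F₁ F₂) F₁ [0, 1, 2, 3] (by decide +kernel)
    (by intro k hk; fin_cases hk <;> simp [rho])]
  split_ifs with h
  · rfl
  · by_contra h1
    obtain ⟨a, rfl⟩ := hF1 s h1
    apply h
    clear h h1
    revert a
    decide +kernel

lemma F2_den (F₁ F₂ : Form ℝ 8)
    (hF2 : ∀ s, F₂ s ≠ 0 → ∃ (i : Fin 3) (a : Fin 4), s = {xi i.succ, yi a}) :
    F₂ = den (rho F₁ F₂) F2R := by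
  funext s
  have h0 : F2R = [4, 5, 6, 7, 8, 9, 10, 11, 12, 13, 14, 15].map
    (fun k => (vmask k, [k], 1)) := by decide +kernel
  rw [h0, den_supp (rho F₁ F₂) F₂ [4, 5, 6, 7, 8, 9, 10, 11, 12, 13, 14, 15] (by decide +kernel)
    (by intro k hk; fin_cases hk <;> simp [rho])]
  split_ifs with h
  · rfl
  · by_contra h1
    obtain ⟨i, a, rfl⟩ := hF2 s h1
    apply h
    clear h h1
    revert i a
    decide +kernel

lemma l2_den (ρ : ℕ → ℝ) (a : List RTerm) : lambda2 (den ρ a) = (2 : ℝ)⁻¹ • den ρ (l2R a) := by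
  rw [lambda2, e1_den ρ 0, den_phi ρ, den_wR, den_pR, den_add]; rfl

lemma l4_den (ρ : ℕ → ℝ) (a : List RTerm) :
    lambda4 (den ρ a) = (Real.sqrt 8)⁻¹ • den ρ (l4R a) := by
  rw [lambda4, e1_den ρ 0, den_phi ρ, den_psi ρ, den_pR, den_wR, den_wR, den_sub]; rfl

lemma p4_term (ρ : ℕ → ℝ) (b : List RTerm) (i : Fin 8) :
    inner' (den ρ b) (lambda4 (e1 i)) • lambda4 (e1 i) = (8 : ℝ)⁻¹ • den ρ (p4R b i.val) := by
  rw [e1_den ρ i, l4_den, p4R, ← den_ieR]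
  have : inner' (den ρ b) ((Real.sqrt 8)⁻¹ • den ρ (l4R (eeR i.val))) =
      (Real.sqrt 8)⁻¹ * inner' (den ρ b) (den ρ (l4R (eeR i.val))) := by
    simp [inner', Finset.mul_sum, mul_left_comm]
  rw [this, smul_smul, smul_smul]
  congr 1
  have h8 : (Real.sqrt 8)⁻¹ * (Real.sqrt 8)⁻¹ = (8 : ℝ)⁻¹ := by
    rw [← mul_inv, Real.mul_self_sqrt (by norm_num)]
  rw [← h8]; ring

lemma pi47_den (ρ : ℕ → ℝ) (b : List RTerm) :
    pi47 (den ρ b) = (8 : ℝ)⁻¹ • den ρ (p4R b 1 ++ p4R b 2 ++ p4R b 3 ++ p4R b 4 ++ p4R b 5 ++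
      p4R b 6 ++ p4R b 7) := by
  rw [pi47]
  simp only [p4_term, Fin.sum_univ_seven, den_append, smul_add]
  rfl

lemma scl_c (F₁ F₂ : Form ℝ 8) (c : ℤ) (l : List RTerm) :
    den (rho F₁ F₂) (scl c [16] l) = ((c : ℝ) * 6⁻¹) • den (rho F₁ F₂) l := by
  rw [den_scl]; simp [mev, rho]

/-- Lemma 5.4.  For `F₁ ∈ span{e⁴,…,e⁷}`, `F₂ ∈ span{eⁱ ∧ eᵃ}` and
`F = e⁰ ∧ F₁ + F₂`:
`2 π²₇(F - (1/6) *₈F³) = λ²(*₇(*₇φ ∧ F₂ - (1/6)F₂³ + (1 - ½ *₇(φ ∧ F₂²)) *₇F₁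
  - *₇(F₁ ∧ F₂ ∧ φ) ∧ *₇F₂))` and
`√8 π⁴₇(F²) = λ⁴(*₇(2 F₁ ∧ F₂ ∧ φ - φ ∧ *₇(F₂²)))`. -/
theorem statement10 (F₁ F₂ : Form ℝ 8)
    (hF1 : ∀ s, F₁ s ≠ 0 → ∃ a : Fin 4, s = {yi a})
    (hF2 : ∀ s, F₂ s ≠ 0 → ∃ (i : Fin 3) (a : Fin 4), s = {xi i.succ, yi a})
    (F : Form ℝ 8) (hF : F = wedge (e1 0) F₁ + F₂) :
    (2 : ℝ) • pi27 (F - (6 : ℝ)⁻¹ • hstar (wedge F (wedge F F))) =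
      lambda2 (star7
        (wedge psi8 F₂ - (6 : ℝ)⁻¹ • wedge F₂ (wedge F₂ F₂) +
          (1 - (2 : ℝ)⁻¹ * (star7 (wedge phi8 (wedge F₂ F₂))) ∅) • star7 F₁ -
          wedge (star7 (wedge F₁ (wedge F₂ phi8))) (star7 F₂))) ∧
    Real.sqrt 8 • pi47 (wedge F F) =
      lambda4 (star7
        ((2 : ℝ) • wedge F₁ (wedge F₂ phi8) - wedge phi8 (star7 (wedge F₂ F₂)))) := by
  have h1 := F1_den F₁ F₂ hF1
  have h2 := F2_den F₁ F₂ hF2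
  set ρ := rho F₁ F₂ with hρ
  have hc : ∀ (c : ℤ) (l : List RTerm), den ρ (scl c [16] l) = ((c : ℝ) * 6⁻¹) • den ρ l :=
    scl_c F₁ F₂
  have hF' : F = den ρ FR := by
    rw [hF, FR, ← den_add, ← den_wR, ← h1, ← h2, e1_den ρ 0]; rfl
  have hP : (Phi8 : Form ℝ 8) = den ρ PhiR := by
    rw [PhiR, ← den_add, ← den_wR, ← den_phi, ← den_psi, Phi8, e1_den ρ 0]; rfl
  have hm : ∀ l : List RTerm, den ρ (scl (-1) [] l) = - den ρ l := by
    intro l; rw [den_scl]; simp [mev]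
  clear_value ρ
  constructor
  · have hA : F - (6 : ℝ)⁻¹ • hstar (wedge F (wedge F F)) = den ρ A1 := by
      rw [A1, den_nrm, ← den_add, hm, hc, ← den_hR, ← den_wR, ← den_wR, ← hF', sub_eq_add_neg]
      simp
    have hR1 : wedge psi8 F₂ - (6 : ℝ)⁻¹ • wedge F₂ (wedge F₂ F₂) +
          (1 - (2 : ℝ)⁻¹ * (star7 (wedge phi8 (wedge F₂ F₂))) ∅) • star7 F₁ -
          wedge (star7 (wedge F₁ (wedge F₂ phi8))) (star7 F₂) = den ρ
        (wR psiR F2R ++ scl (-1) [] (scl 1 [16] (wR F2R (wR F2R F2R)))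
          ++ (sR F1R ++ scl (-1) [] (scl 3 [16] (eR (sR (wR phiR (wR F2R F2R))) (sR F1R))))
          ++ scl (-1) [] (scl 6 [16] (wR (sR (wR F1R (wR F2R phiR))) (sR F2R)))) := by
      simp only [den_append, hm, hc, ← den_eR, ← den_wR, ← den_sR, ← den_phi, ← den_psi,
        ← h1, ← h2]
      rw [sub_smul, mul_smul, sub_eq_add_neg, sub_eq_add_neg, sub_eq_add_neg]
      norm_num
    rw [hA, hR1, den_sR, l2_den, pi27, hP, den_wR, den_hR, den_add, smul_smul]
    have := chk_sound ρ lhs1 rhs1 chk1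
    unfold lhs1 rhs1 at this
    rw [this, show (2 : ℝ) * 4⁻¹ = 2⁻¹ by norm_num]
  · have hR2 : (2 : ℝ) • wedge F₁ (wedge F₂ phi8) - wedge phi8 (star7 (wedge F₂ F₂)) = den ρ
        (scl 2 [] (wR F1R (wR F2R phiR)) ++ scl (-1) [] (wR phiR (sR (wR F2R F2R)))) := by
      rw [← den_add, hm, den_scl]
      simp only [← den_wR, ← den_sR, ← den_phi, ← h1, ← h2]
      simp [mev, sub_eq_add_neg]
    rw [hR2, den_sR, l4_den, hF', den_wR, pi47_den, smul_smul]
    have := chk_sound ρ lhs2 rhs2 chk2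
    unfold lhs2 rhs2 FFR at this
    have h8 : Real.sqrt 8 * Real.sqrt 8 = 8 := Real.mul_self_sqrt (by norm_num)
    have h8' : Real.sqrt 8 ≠ 0 := by positivity
    have e8 : Real.sqrt 8 * 8⁻¹ = (Real.sqrt 8)⁻¹ := by
      rw [← mul_left_inj' h8', inv_mul_cancel₀ h8']
      linear_combination (8 : ℝ)⁻¹ * h8
    rw [this, e8]

end FMpaper
end
end

section
/- Let B ⊂ ℝ⁴ be open and f = (f⁴,…,f⁷): B → ℝ⁴ smooth, with Fourier–Mukai curvature F_∇^S as in the context. Then at every point of B: ( 1 + ½⟨(F_∇^S)², Φ⟩ + (1/24)·*₈((F_∇^S)⁴) )² + 4‖ π²₇( F_∇^S + (1/6)·*₈(F_∇^S)³ ) ‖² + 2‖ π⁴₇( (F_∇^S)² ) ‖² = det( id_{ℝ⁸} + (−√−1·F_∇^S)^♯ ). -/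
open scoped BigOperators

noncomputable section

namespace FMpaper

variable {K : Type*} [NormedField K] [NormedAlgebra ℝ K]

variable {n : ℕ}

def sg (s t : Finset (Fin 8)) : ℤ := (-1) ^ (((s ×ˢ t).filter (fun p => p.2 < p.1)).card)
def SS (j a : Fin 4) : Finset (Fin 8) := {xi j, yi a}
def cc (T u : Finset (Fin 8)) : ℤ := if T ⊆ u then sg T (u \ T) else 0

def phiZ (s : Finset (Fin 8)) : ℤ :=
  if s = ({1, 2, 3} : Finset (Fin 8)) then 1
  else if s = ({1, 4, 5} : Finset (Fin 8)) then 1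
  else if s = ({1, 6, 7} : Finset (Fin 8)) then 1
  else if s = ({2, 4, 6} : Finset (Fin 8)) then 1
  else if s = ({2, 5, 7} : Finset (Fin 8)) then -1
  else if s = ({3, 4, 7} : Finset (Fin 8)) then -1
  else if s = ({3, 5, 6} : Finset (Fin 8)) then -1
  else 0

def psiZ (s : Finset (Fin 8)) : ℤ :=
  if s = ({4, 5, 6, 7} : Finset (Fin 8)) then 1
  else if s = ({2, 3, 6, 7} : Finset (Fin 8)) then 1
  else if s = ({2, 3, 4, 5} : Finset (Fin 8)) then 1
  else if s = ({1, 3, 5, 7} : Finset (Fin 8)) then 1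
  else if s = ({1, 3, 4, 6} : Finset (Fin 8)) then -1
  else if s = ({1, 2, 5, 6} : Finset (Fin 8)) then -1
  else if s = ({1, 2, 4, 7} : Finset (Fin 8)) then -1
  else 0

def PhiZ (s : Finset (Fin 8)) : ℤ := cc {0} s * phiZ (s \ {0}) + psiZ s

def ipsiZ (μ : Fin 8) (t : Finset (Fin 8)) : ℤ :=
  if μ ∈ t then 0 else (-1) ^ ((t.filter (fun j => j < μ)).card) * psiZ (insert μ t)

def LZ (μ : Fin 7) (s : Finset (Fin 8)) : ℤ :=
  cc {0} s * ipsiZ μ.succ (s \ {0}) - cc {μ.succ} s * phiZ (s \ {μ.succ})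

def w1 (j k : Fin 4) : ℤ := !![0,1,0,0;-1,0,0,0;0,0,0,1;0,0,-1,0] j k
def w2 (j k : Fin 4) : ℤ := !![0,0,1,0;0,0,0,-1;-1,0,0,0;0,1,0,0] j k
def w3 (j k : Fin 4) : ℤ := !![0,0,0,1;0,0,1,0;0,-1,0,0;-1,0,0,0] j k

def BZ (L : Finset (Fin 8) → ℤ) (j a k b : Fin 4) : ℤ :=
  if Disjoint (SS j a) (SS k b) then sg (SS j a) (SS k b) * L (SS j a ∪ SS k b) else 0

theorem BPhi : ∀ j a k b, BZ PhiZ j a k b = -(w1 j k * w1 a b + w2 j k * w2 a b - w3 j k * w3 a b) := by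
  decide +kernel
theorem BL0 : ∀ j a k b, BZ (LZ 0) j a k b = w3 j k * w2 a b + w2 j k * w3 a b := by
  decide +kernel
theorem BL1 : ∀ j a k b, BZ (LZ 1) j a k b = -(w3 j k * w1 a b + w1 j k * w3 a b) := by
  decide +kernel
theorem BL2 : ∀ j a k b, BZ (LZ 2) j a k b = w2 j k * w1 a b - w1 j k * w2 a b := by
  decide +kernel
theorem BL3 : ∀ (m : Fin 4) j a k b, BZ (LZ ⟨m+3, by omega⟩) j a k b = 0 := by
  decide +kernel
def lc (i j k l : Fin 4) : ℤ :=
  Int.sign ((j:ℤ)-i) * Int.sign ((k:ℤ)-i) * Int.sign ((l:ℤ)-i) * Int.sign ((k:ℤ)-j) * Int.sign ((l:ℤ)-j) * Int.sign ((l:ℤ)-k)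

def V (m j a : Fin 4) : ℤ :=
  (![!![1,0,0,0;0,-1,0,0;0,0,-1,0;0,0,0,1],
     !![0,1,0,0;1,0,0,0;0,0,0,1;0,0,1,0],
     !![0,0,1,0;0,0,0,-1;1,0,0,0;0,-1,0,0],
     !![0,0,0,1;0,0,1,0;0,-1,0,0;-1,0,0,0]] m) j a
def CZ (t T : Finset (Fin 8)) : ℤ :=
  (if t = T then 1 else 0) +
    sg tᶜ t * (if T ⊆ tᶜ then sg (tᶜ \ T) T * PhiZ (tᶜ \ T) else 0)
theorem CZ_zero : ∀ t, (∃ j a, t = SS j a) ∨ ∀ j a, CZ t (SS j a) = 0 := by decide +kernel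
theorem CZ_eq : ∀ k b j a, CZ (SS k b) (SS j a) = ∑ m, V m k b * V m j a := by decide +kernel
theorem LZ_gram : ∀ m n : Fin 3, ∑ s, LZ (m.castLE (by omega)) s * LZ (n.castLE (by omega)) s
    = if m = n then 8 else 0 := by decide +kernel

def s1 (j k : Fin 4) : ℤ :=
  if j = k then 0 else (-1) ^ ((Finset.univ.filter (fun x => x ≠ j ∧ x < k)).card)
def s2 (j k l : Fin 4) : ℤ :=
  if l = j ∨ l = k then 0 else (-1) ^ ((Finset.univ.filter (fun x => x ≠ j ∧ x ≠ k ∧ x < l)).card)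
def s3 (j k l m : Fin 4) : ℤ := if m = j ∨ m = k ∨ m = l then 0 else 1
theorem c1 : ∀ j a k b, cc (SS k b) (SS j a)ᶜ = s1 j k * s1 a b := by decide +kernel
theorem c2 : ∀ j a k b, (j = k ∨ a = b) ∨
    ∀ k' b', cc (SS k' b') ((SS j a)ᶜ \ SS k b) = - (s2 j k k' * s2 a b b') := by decide +kernel
theorem c3 : ∀ j a k b, (j = k ∨ a = b) ∨ ∀ k' b', ((k' = j ∨ k' = k) ∨ (b' = a ∨ b' = b)) ∨
    ∀ k'' b'', (if ((SS j a)ᶜ \ SS k b) \ SS k' b' = SS k'' b'' then (1:ℤ) else 0) =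
      s3 j k k' k'' * s3 a b b' b'' := by decide +kernel
theorem c4 : ∀ j k l m, s1 j k * s2 j k l * s3 j k l m = (-1) ^ (j : ℕ) * lc j k l m := by
  decide +kernel
theorem c5 : ∀ j a, sg (SS j a)ᶜ (SS j a) = - ((-1) ^ (j : ℕ) * (-1) ^ (a : ℕ)) := by decide +kernel
theorem c6 : ∀ j a, cc (SS j a) Finset.univ = - ((-1) ^ (j : ℕ) * (-1) ^ (a : ℕ)) := by decide +kernel
def bx (s : Finset (Fin 8)) : ℕ := (s.filter (fun i => i < 4)).card
def bY (s : Finset (Fin 8)) : ℕ := (s.filter (fun i => ¬ i < 4)).card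
theorem c7 : ∀ t : Finset (Fin 8), (bx tᶜ = 3 ∧ bY tᶜ = 3) → ∃ j a, t = SS j a := by decide +kernel
theorem c8 : ∀ j a k b, SS j a = SS k b ↔ j = k ∧ a = b := by decide +kernel
theorem c9 : ∀ j a, bx (SS j a) = 1 ∧ bY (SS j a) = 1 := by decide +kernel
theorem c10 : ∀ j a (u : Finset (Fin 8)), (if {xi j} ⊆ u then sg {xi j} (u \ {xi j}) * (if u \ {xi j} = {yi a} then 1 else 0) else 0) = if u = SS j a then 1 else 0 := by decide +kernel
theorem c11 : ∀ i k j a : Fin 4, ({xi i, xi k} : Finset (Fin 8)) ≠ SS j a ∧ ({yi i, yi k} : Finset (Fin 8)) ≠ SS j a := by decide +kernel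

theorem signMerge_eq {K : Type*} [NormedField K] [NormedAlgebra ℝ K] (s t : Finset (Fin 8)) :
    (signMerge s t : K) = ((sg s t : ℤ) : K) := by
  simp [signMerge, sg]

theorem wedge_E_left {K : Type*} [NormedField K] [NormedAlgebra ℝ K] (T : Finset (Fin 8)) (β : Form K 8)
    (u : Finset (Fin 8)) :
    wedge (fun s => if s = T then (1 : K) else 0) β u = ((cc T u : ℤ) : K) * β (u \ T) := by
  unfold wedge cc
  simp only [signMerge_eq, mul_ite, mul_one, mul_zero, ite_mul, zero_mul]
  rw [Finset.sum_ite_eq']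
  simp only [Finset.mem_powerset]
  split_ifs <;> simp

theorem wedge_E_right {K : Type*} [NormedField K] [NormedAlgebra ℝ K] (T : Finset (Fin 8)) (α : Form K 8)
    (u : Finset (Fin 8)) :
    wedge α (fun s => if s = T then (1 : K) else 0) u =
      (((if T ⊆ u then sg (u \ T) T else 0 : ℤ)) : K) * α (u \ T) := by
  unfold wedge
  simp only [signMerge_eq, mul_ite, mul_one, mul_zero]
  by_cases h : T ⊆ u
  · rw [Finset.sum_eq_single (u \ T)]
    · simp [h]
    · intro s hs hne
      rw [if_neg]
      rintro rfl
      exact hne (by rw [Finset.sdiff_sdiff_eq_self (Finset.mem_powerset.1 hs)])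
    · intro h'; exact absurd (Finset.mem_powerset.2 Finset.sdiff_subset) h'
  · rw [if_neg h, Finset.sum_eq_zero]
    · simp
    · intro s hs
      rw [if_neg]
      rintro rfl
      exact h Finset.sdiff_subset

theorem phi8_eq_s11 {K : Type*} [NormedField K] [NormedAlgebra ℝ K] :
    (phi8 : Form K 8) = fun s => ((phiZ s : ℤ) : K) := by
  funext s; unfold phi8 phiZ; push_cast; rfl

theorem psi8_eq {K : Type*} [NormedField K] [NormedAlgebra ℝ K] :
    (psi8 : Form K 8) = fun s => ((psiZ s : ℤ) : K) := by
  funext s; unfold psi8 psiZ; push_cast; rfl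

theorem Phi8_eq {K : Type*} [NormedField K] [NormedAlgebra ℝ K] :
    (Phi8 : Form K 8) = fun s => ((PhiZ s : ℤ) : K) := by
  funext s
  unfold Phi8 PhiZ
  rw [Pi.add_apply, phi8_eq_s11, psi8_eq]
  have := wedge_E_left (K := K) {0} (fun s => ((phiZ s : ℤ) : K)) s
  unfold e1
  rw [this]; push_cast; rfl

theorem lambda4_eq {K : Type*} [NormedField K] [NormedAlgebra ℝ K] (μ : Fin 7) :
    (lambda4 (e1 μ.succ) : Form K 8) =
      fun s => (algebraMap ℝ K (Real.sqrt 8))⁻¹ * ((LZ μ s : ℤ) : K) := by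
  funext s
  unfold lambda4 LZ
  rw [Pi.smul_apply, Pi.sub_apply, smul_eq_mul, phi8_eq_s11, psi8_eq]
  have h1 : (iprod (sharp1 (e1 μ.succ)) (fun s => ((psiZ s : ℤ) : K)) : Form K 8) =
      fun s => ((ipsiZ μ.succ s : ℤ) : K) := by
    funext t
    unfold iprod sharp1 e1
    simp only [Finset.singleton_inj, ite_mul, one_mul, zero_mul, Finset.sum_ite_eq',
      Finset.mem_univ, if_true]
    unfold iprodB ipsiZ
    split_ifs <;> simp
  rw [h1]
  unfold e1
  rw [wedge_E_left, wedge_E_left]; push_cast; rfl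

def g (p : Fin 4 → Fin 4 → ℝ) : Form ℝ 8 :=
  fun s => ∑ j, ∑ a, p j a * (if s = SS j a then 1 else 0)

theorem gammaS_eq (f : (Fin 4 → ℝ) → (Fin 4 → ℝ)) (x : Fin 4 → ℝ) : gammaS f x = g (pd f x) := by
  funext s
  unfold gammaS g
  simp only [Finset.sum_apply, Pi.smul_apply, smul_eq_mul]
  refine Finset.sum_congr rfl fun j _ => Finset.sum_congr rfl fun a _ => ?_
  congr 1
  have := c10 j a s
  have h2 := congrArg (fun z : ℤ => (z : ℝ)) this
  unfold e1
  rw [wedge_E_left]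
  unfold cc
  push_cast at h2 ⊢
  rw [← h2]
  split_ifs <;> simp

theorem wedge_g (p : Fin 4 → Fin 4 → ℝ) (β : Form ℝ 8) (u : Finset (Fin 8)) :
    wedge (g p) β u = ∑ j, ∑ a, p j a * ((cc (SS j a) u : ℝ) * β (u \ SS j a)) := by
  have : ∀ j a, ((cc (SS j a) u : ℝ) * β (u \ SS j a)) =
      wedge (fun s => if s = SS j a then (1 : ℝ) else 0) β u := fun j a => (wedge_E_left _ _ _).symm
  simp only [this]
  unfold wedge g
  simp only [Finset.mul_sum, Finset.sum_mul]
  rw [Finset.sum_comm]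
  refine Finset.sum_congr rfl fun j _ => ?_
  rw [Finset.sum_comm]
  refine Finset.sum_congr rfl fun a _ => Finset.sum_congr rfl fun s _ => ?_
  ring

theorem inner_B (L : Finset (Fin 8) → ℤ) (S T : Finset (Fin 8)) :
    ∑ u, ((cc S u : ℝ) * (if u \ S = T then 1 else 0)) * (L u : ℝ) =
      ((if Disjoint S T then sg S T * L (S ∪ T) else 0 : ℤ) : ℝ) := by
  by_cases h : Disjoint S T
  · rw [Finset.sum_eq_single (S ∪ T)]
    · have e : (S ∪ T) \ S = T := by
        rw [Finset.union_sdiff_left]; exact Finset.sdiff_eq_self_of_disjoint h.symm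
      simp [h, e, cc]
    · intro u _ hu
      by_cases h1 : S ⊆ u
      · rw [if_neg]
        · simp
        · rintro rfl; exact hu (Finset.union_sdiff_of_subset h1).symm
      · simp [cc, h1]
    · simp
  · rw [Finset.sum_eq_zero]
    · simp [h]
    · intro u _
      rw [if_neg]
      · simp
      · rintro rfl; exact h Finset.disjoint_sdiff

theorem inner_gg (p : Fin 4 → Fin 4 → ℝ) (L : Finset (Fin 8) → ℤ) :
    ∑ u, wedge (g p) (g p) u * (L u : ℝ) =
      ∑ j, ∑ a, ∑ k, ∑ b, p j a * p k b * (BZ L j a k b : ℝ) := by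
  simp only [BZ, ← inner_B]
  simp only [wedge_g]
  simp only [g, Finset.mul_sum, Finset.sum_mul]
  rw [Finset.sum_comm]
  refine Finset.sum_congr rfl fun j _ => ?_
  rw [Finset.sum_comm]
  refine Finset.sum_congr rfl fun a _ => ?_
  rw [Finset.sum_comm]
  refine Finset.sum_congr rfl fun k _ => ?_
  rw [Finset.sum_comm]
  refine Finset.sum_congr rfl fun b _ => Finset.sum_congr rfl fun u _ => ?_
  ring

def T3 (p : Fin 4 → Fin 4 → ℝ) (j a : Fin 4) : ℝ :=
  ∑ k, ∑ b, ∑ k', ∑ b', ∑ k'', ∑ b'',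
    p k b * p k' b' * p k'' b'' * ((lc j k k' k'' : ℝ) * (lc a b b' b'' : ℝ))

theorem D3 (j a k b k' b' k'' b'' : Fin 4) :
    cc (SS k b) (SS j a)ᶜ * cc (SS k' b') ((SS j a)ᶜ \ SS k b) *
      (if ((SS j a)ᶜ \ SS k b) \ SS k' b' = SS k'' b'' then (1:ℤ) else 0) =
    - ((-1) ^ (j : ℕ) * (-1) ^ (a : ℕ)) * (lc j k k' k'' * lc a b b' b'') := by
  have e : - ((-1) ^ (j : ℕ) * (-1) ^ (a : ℕ)) * (lc j k k' k'' * lc a b b' b'') =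
    - ((s1 j k * s2 j k k' * s3 j k k' k'') * (s1 a b * s2 a b b' * s3 a b b' b'')) := by
    rw [c4, c4]; ring
  rw [e, c1]
  rcases c2 j a k b with h | h
  · rcases h with h | h <;> simp [s1, h]
  rcases c3 j a k b with h' | h'
  · rcases h' with h' | h' <;> simp [s1, h']
  rw [h]
  rcases h' k' b' with h' | h'
  · rcases h' with h' | h' <;> simp [s2, h']
  rw [h' k'' b'']
  ring

theorem g3_compl (p : Fin 4 → Fin 4 → ℝ) (j a : Fin 4) :
    wedge (g p) (wedge (g p) (g p)) (SS j a)ᶜ = - ((-1) ^ (j : ℕ) * (-1) ^ (a : ℕ)) * T3 p j a := by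
  simp only [wedge_g]
  simp only [g, T3, Finset.mul_sum]
  refine Finset.sum_congr rfl fun k _ => Finset.sum_congr rfl fun b _ =>
    Finset.sum_congr rfl fun k' _ => Finset.sum_congr rfl fun b' _ =>
    Finset.sum_congr rfl fun k'' _ => Finset.sum_congr rfl fun b'' _ => ?_
  have h := congrArg (fun z : ℤ => (z : ℝ)) (D3 j a k b k' b' k'' b'')
  push_cast at h
  linear_combination (p k b * p k' b' * p k'' b'') * h

theorem pm (j a : ℕ) : ((-1 : ℝ) ^ j * (-1) ^ a) * ((-1 : ℝ) ^ j * (-1) ^ a) = 1 := by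
  rw [mul_mul_mul_comm, ← mul_pow, ← mul_pow]; simp

theorem star_g3 (p : Fin 4 → Fin 4 → ℝ) (j a : Fin 4) :
    hstar (wedge (g p) (wedge (g p) (g p))) (SS j a) = T3 p j a := by
  unfold hstar
  rw [g3_compl, signMerge_eq, c5]
  push_cast
  linear_combination (T3 p j a) * pm j a

theorem g4_top (p : Fin 4 → Fin 4 → ℝ) :
    hstar (wedge (g p) (wedge (g p) (wedge (g p) (g p)))) ∅ = ∑ j, ∑ a, p j a * T3 p j a := by
  unfold hstar
  rw [wedge_g]
  have : (signMerge (∅ : Finset (Fin 8))ᶜ ∅ : ℝ) = 1 := by simp [signMerge]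
  rw [this, one_mul]
  refine Finset.sum_congr rfl fun j _ => Finset.sum_congr rfl fun a _ => ?_
  rw [Finset.compl_empty, c6, ← Finset.compl_eq_univ_sdiff, g3_compl]
  push_cast
  linear_combination (p j a * T3 p j a) * pm j a

def bg (k : ℕ) (α : Form ℝ 8) : Prop := ∀ s, α s ≠ 0 → bx s = k ∧ bY s = k

theorem bg_wedge {k l : ℕ} {α β : Form ℝ 8} (hα : bg k α) (hβ : bg l β) : bg (k + l) (wedge α β) := by
  intro u hu
  obtain ⟨s, hs, h⟩ := Finset.exists_ne_zero_of_sum_ne_zero hu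
  have h1 := hα s (by rintro h0; simp [h0] at h)
  have h2 := hβ (u \ s) (by rintro h0; simp [h0] at h)
  have hsu : s ∪ (u \ s) = u := Finset.union_sdiff_of_subset (Finset.mem_powerset.1 hs)
  have hd : Disjoint s (u \ s) := Finset.disjoint_sdiff
  have hx : bx u = bx s + bx (u \ s) := by
    unfold bx
    rw [← Finset.card_union_of_disjoint (Finset.disjoint_filter_filter hd), ← Finset.filter_union, hsu]
  have hy : bY u = bY s + bY (u \ s) := by
    unfold bY
    rw [← Finset.card_union_of_disjoint (Finset.disjoint_filter_filter hd), ← Finset.filter_union, hsu]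
  omega

theorem bg_g (p : Fin 4 → Fin 4 → ℝ) : bg 1 (g p) := by
  intro s hs
  obtain ⟨j, _, h⟩ := Finset.exists_ne_zero_of_sum_ne_zero hs
  obtain ⟨a, _, h⟩ := Finset.exists_ne_zero_of_sum_ne_zero h
  have : s = SS j a := by
    by_contra h0
    simp [h0] at h
  rw [this]; exact c9 j a

theorem g_SS (p : Fin 4 → Fin 4 → ℝ) (j a : Fin 4) : g p (SS j a) = p j a := by
  simp only [g, c8]
  rw [Finset.sum_eq_single j, Finset.sum_eq_single a]
  · simp
  · intro b _ hb; simp [hb.symm]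
  · simp
  · intro b _ hb; simp [hb.symm]
  · simp

theorem g_other (p : Fin 4 → Fin 4 → ℝ) (s : Finset (Fin 8)) (h : ∀ j a, s ≠ SS j a) : g p s = 0 := by
  simp [g, h]

theorem alpha_eq (p : Fin 4 → Fin 4 → ℝ) :
    (g p - (6 : ℝ)⁻¹ • hstar (wedge (g p) (wedge (g p) (g p)))) =
      g (fun j a => p j a - 6⁻¹ * T3 p j a) := by
  funext t
  by_cases h : ∃ j a, t = SS j a
  · obtain ⟨j, a, rfl⟩ := h
    rw [g_SS, Pi.sub_apply, Pi.smul_apply, star_g3, g_SS, smul_eq_mul]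
  · rw [Pi.sub_apply, Pi.smul_apply, smul_eq_mul]
    have h' : ∀ j a, t ≠ SS j a := fun j a e => h ⟨j, a, e⟩
    rw [g_other _ _ h', g_other _ _ h']
    have : wedge (g p) (wedge (g p) (g p)) tᶜ = 0 := by
      by_contra h0
      exact h (c7 t (bg_wedge (bg_g p) (bg_wedge (bg_g p) (bg_g p)) _ h0))
    simp [hstar, this]

theorem pi27_g (q : Fin 4 → Fin 4 → ℝ) (t : Finset (Fin 8)) :
    pi27 (g q) t = 4⁻¹ * ∑ j, ∑ a, q j a * (CZ t (SS j a) : ℝ) := by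
  unfold pi27
  rw [Pi.smul_apply, Pi.add_apply, smul_eq_mul]
  congr 1
  have : ∀ u, wedge Phi8 (g q) u = ∑ j, ∑ a, q j a *
      wedge Phi8 (fun s => if s = SS j a then (1 : ℝ) else 0) u := by
    intro u
    unfold wedge g
    simp only [Finset.mul_sum]
    rw [Finset.sum_comm]
    refine Finset.sum_congr rfl fun j _ => ?_
    rw [Finset.sum_comm]
    refine Finset.sum_congr rfl fun a _ => Finset.sum_congr rfl fun s _ => ?_
    ring
  unfold hstar
  rw [this, signMerge_eq]
  simp only [g, Finset.mul_sum, ← Finset.sum_add_distrib]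
  refine Finset.sum_congr rfl fun j _ => Finset.sum_congr rfl fun a _ => ?_
  rw [wedge_E_right, Phi8_eq]
  unfold CZ
  push_cast
  split_ifs <;> ring

theorem norm27 (q : Fin 4 → Fin 4 → ℝ) :
    4 * ∑ t, (pi27 (g q) t) ^ 2 = ∑ m, (∑ j, ∑ a, q j a * (V m j a : ℝ)) ^ 2 := by
  have h1 : ∑ t, (pi27 (g q) t) ^ 2 = ∑ z : Fin 4 × Fin 4, (pi27 (g q) (SS z.1 z.2)) ^ 2 := by
    rw [← Finset.sum_image (s := Finset.univ) (g := fun z : Fin 4 × Fin 4 => SS z.1 z.2)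
      (f := fun t => (pi27 (g q) t) ^ 2)]
    · symm
      apply Finset.sum_subset (Finset.subset_univ _)
      intro t _ ht
      rcases CZ_zero t with ⟨j, a, h⟩ | h
      · exact absurd (Finset.mem_image.2 ⟨(j, a), Finset.mem_univ _, h.symm⟩) ht
      · rw [pi27_g]; simp [h]
    · rintro ⟨j, a⟩ _ ⟨k, b⟩ _ h
      have := (c8 j a k b).1 h
      simp [this]
  rw [h1, Fintype.sum_prod_type]
  have h2 : ∀ k b, pi27 (g q) (SS k b) =
      4⁻¹ * ∑ m, (V m k b : ℝ) * ∑ j, ∑ a, q j a * (V m j a : ℝ) := by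
    intro k b
    rw [pi27_g]
    congr 1
    simp only [CZ_eq, Finset.mul_sum]
    push_cast
    simp only [Finset.mul_sum]
    symm
    rw [Finset.sum_comm]
    refine Finset.sum_congr rfl fun j _ => ?_
    rw [Finset.sum_comm]
    refine Finset.sum_congr rfl fun a _ => Finset.sum_congr rfl fun s _ => ?_
    ring
  simp only [h2]
  obtain ⟨X, hX⟩ : ∃ X : Fin 4 → ℝ, ∀ m, X m = ∑ j, ∑ a, q j a * (V m j a : ℝ) :=
    ⟨_, fun _ => rfl⟩
  simp only [← hX]
  simp [Fin.sum_univ_four, V]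
  ring

theorem bsum_ge (p : Fin 4 → Fin 4 → ℝ) (m : Fin 4) :
    ∑ u, wedge (g p) (g p) u * (LZ ⟨m+3, by omega⟩ u : ℝ) = 0 := by
  rw [inner_gg]; simp [BL3]

theorem norm47 (p : Fin 4 → Fin 4 → ℝ) :
    2 * ∑ s, (pi47 (wedge (g p) (g p)) s) ^ 2 =
      4⁻¹ * ((∑ u, wedge (g p) (g p) u * (LZ 0 u : ℝ)) ^ 2 +
        (∑ u, wedge (g p) (g p) u * (LZ 1 u : ℝ)) ^ 2 +
        (∑ u, wedge (g p) (g p) u * (LZ 2 u : ℝ)) ^ 2) := by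
  have h0 : ∀ s, pi47 (wedge (g p) (g p)) s =
      8⁻¹ * ∑ m : Fin 7, (∑ u, wedge (g p) (g p) u * (LZ m u : ℝ)) * (LZ m s : ℝ) := by
    intro s
    unfold pi47 inner'
    simp only [lambda4_eq, Finset.sum_apply, Pi.smul_apply, smul_eq_mul, Finset.mul_sum,
      Finset.sum_mul]
    refine Finset.sum_congr rfl fun m _ => Finset.sum_congr rfl fun u _ => ?_
    have h8 : (Real.sqrt 8)⁻¹ * (Real.sqrt 8)⁻¹ = 8⁻¹ := by
      rw [← mul_inv, Real.mul_self_sqrt (by norm_num)]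
    simp only [Algebra.algebraMap_self, RingHom.id_apply]
    linear_combination (wedge (g p) (g p) u * (LZ m u : ℝ) * (LZ m s : ℝ)) * h8
  have h3 := bsum_ge p 0
  have h4 := bsum_ge p 1
  have h5 := bsum_ge p 2
  have h6 := bsum_ge p 3
  change ∑ u, wedge (g p) (g p) u * (LZ 3 u : ℝ) = 0 at h3
  change ∑ u, wedge (g p) (g p) u * (LZ 4 u : ℝ) = 0 at h4
  change ∑ u, wedge (g p) (g p) u * (LZ 5 u : ℝ) = 0 at h5
  change ∑ u, wedge (g p) (g p) u * (LZ 6 u : ℝ) = 0 at h6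
  have h1 : ∀ s, pi47 (wedge (g p) (g p)) s =
      8⁻¹ * ((∑ u, wedge (g p) (g p) u * (LZ 0 u : ℝ)) * (LZ 0 s : ℝ) +
       (∑ u, wedge (g p) (g p) u * (LZ 1 u : ℝ)) * (LZ 1 s : ℝ) +
       (∑ u, wedge (g p) (g p) u * (LZ 2 u : ℝ)) * (LZ 2 s : ℝ)) := by
    intro s
    rw [h0, Fin.sum_univ_seven, h3, h4, h5, h6]; ring
  simp only [h1]
  generalize (∑ u, wedge (g p) (g p) u * (LZ 0 u : ℝ)) = b0
  generalize (∑ u, wedge (g p) (g p) u * (LZ 1 u : ℝ)) = b1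
  generalize (∑ u, wedge (g p) (g p) u * (LZ 2 u : ℝ)) = b2
  have G : ∀ m n : Fin 3, ∑ s, (LZ (m.castLE (by omega)) s : ℝ) * (LZ (n.castLE (by omega)) s : ℝ)
      = if m = n then 8 else 0 := by
    intro m n
    have := LZ_gram m n
    exact_mod_cast this
  have g00 : ∑ s, (LZ 0 s : ℝ) * (LZ 0 s : ℝ) = 8 := G 0 0
  have g11 : ∑ s, (LZ 1 s : ℝ) * (LZ 1 s : ℝ) = 8 := G 1 1
  have g22 : ∑ s, (LZ 2 s : ℝ) * (LZ 2 s : ℝ) = 8 := G 2 2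
  have g01 : ∑ s, (LZ 0 s : ℝ) * (LZ 1 s : ℝ) = 0 := G 0 1
  have g02 : ∑ s, (LZ 0 s : ℝ) * (LZ 2 s : ℝ) = 0 := G 0 2
  have g12 : ∑ s, (LZ 1 s : ℝ) * (LZ 2 s : ℝ) = 0 := G 1 2
  have e : ∑ s, (8⁻¹ * (b0 * (LZ 0 s : ℝ) + b1 * (LZ 1 s : ℝ) + b2 * (LZ 2 s : ℝ))) ^ 2 =
      64⁻¹ * (b0 ^ 2 * ∑ s, (LZ 0 s : ℝ) * (LZ 0 s : ℝ) + b1 ^ 2 * ∑ s, (LZ 1 s : ℝ) * (LZ 1 s : ℝ)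
        + b2 ^ 2 * ∑ s, (LZ 2 s : ℝ) * (LZ 2 s : ℝ) + 2 * b0 * b1 * ∑ s, (LZ 0 s : ℝ) * (LZ 1 s : ℝ)
        + 2 * b0 * b2 * ∑ s, (LZ 0 s : ℝ) * (LZ 2 s : ℝ)
        + 2 * b1 * b2 * ∑ s, (LZ 1 s : ℝ) * (LZ 2 s : ℝ)) := by
    simp only [Finset.mul_sum, ← Finset.sum_add_distrib]
    refine Finset.sum_congr rfl fun s _ => ?_
    ring
  rw [e, g00, g11, g22, g01, g02, g12]
  ring

theorem det_eq (p : Fin 4 → Fin 4 → ℝ) :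
    ((1 : Matrix (Fin 8) (Fin 8) ℝ) + mat2 (g p)).det =
      (1 + (Matrix.of p).transpose * Matrix.of p).det := by
  have hy : ∀ a : Fin 4, Fin.natAdd 4 a = yi a := by decide
  have hlt : ∀ i j : Fin 4, xi i < yi j ∧ ¬ yi j < xi i ∧ xi i ≠ yi j := by decide
  have hxx : ∀ i j, g p {xi i, xi j} = 0 := fun i j => g_other _ _ fun k a => (c11 i j k a).1
  have hyy : ∀ i j, g p {yi i, yi j} = 0 := fun i j => g_other _ _ fun k a => (c11 i j k a).2
  have hxi : ∀ i j : Fin 4, xi i = xi j ↔ i = j := by decide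
  have hyi : ∀ i j : Fin 4, yi i = yi j ↔ i = j := by decide
  rw [← Matrix.det_submatrix_equiv_self (finSumFinEquiv : Fin 4 ⊕ Fin 4 ≃ Fin 8)]
  have : ((1 : Matrix (Fin 8) (Fin 8) ℝ) + mat2 (g p)).submatrix
      (finSumFinEquiv : Fin 4 ⊕ Fin 4 ≃ Fin 8) (finSumFinEquiv : Fin 4 ⊕ Fin 4 ≃ Fin 8) =
      Matrix.fromBlocks 1 (Matrix.of p) (-(Matrix.of p).transpose) 1 := by
    ext i j
    rcases i with i | i <;> rcases j with j | j
    · change (1 + mat2 (g p)) (xi i) (xi j) = (1 : Matrix (Fin 4) (Fin 4) ℝ) i j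
      simp [mat2, hxx, Matrix.one_apply, hxi]
    · rw [Matrix.submatrix_apply, finSumFinEquiv_apply_left, finSumFinEquiv_apply_right, hy]
      change (1 + mat2 (g p)) (xi i) (yi j) = p i j
      simp [mat2, Matrix.one_apply, hlt]
      exact g_SS p i j
    · rw [Matrix.submatrix_apply, finSumFinEquiv_apply_left, finSumFinEquiv_apply_right, hy]
      change (1 + mat2 (g p)) (yi i) (xi j) = - p j i
      have := g_SS p j i
      unfold SS at this
      simp [mat2, Matrix.one_apply, hlt, (hlt _ _).2.2.symm]
      rw [Finset.pair_comm, this]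
    · rw [Matrix.submatrix_apply, finSumFinEquiv_apply_right, finSumFinEquiv_apply_right, hy, hy]
      change (1 + mat2 (g p)) (yi i) (yi j) = (1 : Matrix (Fin 4) (Fin 4) ℝ) i j
      simp [mat2, hyy, Matrix.one_apply, hyi]
  rw [this, Matrix.det_fromBlocks_one₁₁]
  congr 1
  rw [Matrix.neg_mul, sub_neg_eq_add]

theorem lcsum (j : Fin 4) (G : Fin 4 → Fin 4 → Fin 4 → ℝ) :
    ∑ k, ∑ k', ∑ k'', (lc j k k' k'' : ℝ) * G k k' k'' =
      (-1) ^ (j : ℕ) *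
      (G (j.succAbove 0) (j.succAbove 1) (j.succAbove 2)
      - G (j.succAbove 0) (j.succAbove 2) (j.succAbove 1)
      - G (j.succAbove 1) (j.succAbove 0) (j.succAbove 2)
      + G (j.succAbove 1) (j.succAbove 2) (j.succAbove 0)
      + G (j.succAbove 2) (j.succAbove 0) (j.succAbove 1)
      - G (j.succAbove 2) (j.succAbove 1) (j.succAbove 0)) := by
  have e2 : Int.sign 2 = 1 := rfl
  have e3 : Int.sign 3 = 1 := rfl
  fin_cases j <;> simp [Fin.sum_univ_four, lc, Fin.succAbove, e2, e3] <;> ring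

def cof (p : Fin 4 → Fin 4 → ℝ) (j a : Fin 4) : ℝ :=
  (-1) ^ (j : ℕ) * ((-1) ^ (a : ℕ) *
    (p (j.succAbove 0) (a.succAbove 0) * (p (j.succAbove 1) (a.succAbove 1) * p (j.succAbove 2) (a.succAbove 2)
        - p (j.succAbove 1) (a.succAbove 2) * p (j.succAbove 2) (a.succAbove 1))
    - p (j.succAbove 0) (a.succAbove 1) * (p (j.succAbove 1) (a.succAbove 0) * p (j.succAbove 2) (a.succAbove 2)
        - p (j.succAbove 1) (a.succAbove 2) * p (j.succAbove 2) (a.succAbove 0))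
    + p (j.succAbove 0) (a.succAbove 2) * (p (j.succAbove 1) (a.succAbove 0) * p (j.succAbove 2) (a.succAbove 1)
        - p (j.succAbove 1) (a.succAbove 1) * p (j.succAbove 2) (a.succAbove 0))))

theorem T3_eq (p : Fin 4 → Fin 4 → ℝ) (j a : Fin 4) : T3 p j a = 6 * cof p j a := by
  have : T3 p j a = ∑ k, ∑ k', ∑ k'', (lc j k k' k'' : ℝ) *
      ∑ b, ∑ b', ∑ b'', (lc a b b' b'' : ℝ) * (p k b * p k' b' * p k'' b'') := by
    unfold T3
    refine Finset.sum_congr rfl fun k _ => ?_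
    rw [Finset.sum_comm]
    refine Finset.sum_congr rfl fun k' _ => ?_
    simp only [Finset.mul_sum]
    symm
    rw [Finset.sum_comm]
    refine Finset.sum_congr rfl fun b _ => ?_
    rw [Finset.sum_comm]
    refine Finset.sum_congr rfl fun b' _ => Finset.sum_congr rfl fun k'' _ =>
      Finset.sum_congr rfl fun b'' _ => ?_
    ring
  rw [this, lcsum]
  simp only [lcsum]
  unfold cof
  ring

def mm (p : Fin 4 → Fin 4 → ℝ) (j k a b : Fin 4) : ℝ := p j a * p k b - p j b * p k a

theorem Qw1 (p : Fin 4 → Fin 4 → ℝ) :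
    ∑ j, ∑ a, ∑ k, ∑ b, p j a * p k b * ((-(w1 j k * w1 a b + w2 j k * w2 a b - w3 j k * w3 a b) : ℤ) : ℝ) =
      2 * (-mm p 0 1 0 1 - mm p 0 1 2 3 - mm p 2 3 0 1 - mm p 2 3 2 3 - mm p 0 2 0 2 + mm p 0 2 1 3 + mm p 1 3 0 2 - mm p 1 3 1 3 + mm p 0 3 0 3 + mm p 0 3 1 2 + mm p 1 2 0 3 + mm p 1 2 1 2) := by
  simp [Fin.sum_univ_four, w1, w2, w3, mm]
  ring

theorem Qw2 (p : Fin 4 → Fin 4 → ℝ) :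
    ∑ j, ∑ a, ∑ k, ∑ b, p j a * p k b * ((w3 j k * w2 a b + w2 j k * w3 a b : ℤ) : ℝ) =
      2 * (mm p 0 3 0 2 - mm p 0 3 1 3 + mm p 1 2 0 2 - mm p 1 2 1 3 + mm p 0 2 0 3 + mm p 0 2 1 2 - mm p 1 3 0 3 - mm p 1 3 1 2) := by
  simp [Fin.sum_univ_four, w1, w2, w3, mm]
  ring

theorem Qw3 (p : Fin 4 → Fin 4 → ℝ) :
    ∑ j, ∑ a, ∑ k, ∑ b, p j a * p k b * ((-(w3 j k * w1 a b + w1 j k * w3 a b) : ℤ) : ℝ) =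
      2 * (-mm p 0 3 0 1 - mm p 0 3 2 3 - mm p 1 2 0 1 - mm p 1 2 2 3 - mm p 0 1 0 3 - mm p 0 1 1 2 - mm p 2 3 0 3 - mm p 2 3 1 2) := by
  simp [Fin.sum_univ_four, w1, w2, w3, mm]
  ring

theorem Qw4 (p : Fin 4 → Fin 4 → ℝ) :
    ∑ j, ∑ a, ∑ k, ∑ b, p j a * p k b * ((w2 j k * w1 a b - w1 j k * w2 a b : ℤ) : ℝ) =
      2 * (mm p 0 2 0 1 + mm p 0 2 2 3 - mm p 1 3 0 1 - mm p 1 3 2 3 - mm p 0 1 0 2 + mm p 0 1 1 3 - mm p 2 3 0 2 + mm p 2 3 1 3) := by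
  simp [Fin.sum_univ_four, w1, w2, w3, mm]
  ring

theorem real_main (p : Fin 4 → Fin 4 → ℝ) :
    (1 - 2⁻¹ * ∑ u, wedge (g p) (g p) u * (PhiZ u : ℝ) +
      24⁻¹ * hstar (wedge (g p) (wedge (g p) (wedge (g p) (g p)))) ∅) ^ 2 +
    4 * ∑ t, (pi27 (g p - (6 : ℝ)⁻¹ • hstar (wedge (g p) (wedge (g p) (g p)))) t) ^ 2 +
    2 * ∑ s, (pi47 (wedge (g p) (g p)) s) ^ 2 =
    ((1 : Matrix (Fin 8) (Fin 8) ℝ) + mat2 (g p)).det := by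
  rw [alpha_eq, norm27, norm47, det_eq, g4_top]
  simp only [inner_gg, BPhi, BL0, BL1, BL2, T3_eq]
  rw [Qw1, Qw2, Qw3, Qw4]
  rw [Matrix.det_succ_row_zero]
  simp [Fin.sum_univ_four, Fin.sum_univ_three, Matrix.det_fin_three, Matrix.mul_apply, Matrix.one_apply, Fin.succAbove, V, cof, mm]
  generalize p 0 0 = a0
  generalize p 0 1 = a1
  generalize p 0 2 = a2
  generalize p 0 3 = a3
  generalize p 1 0 = b0
  generalize p 1 1 = b1
  generalize p 1 2 = b2
  generalize p 1 3 = b3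
  generalize p 2 0 = c0
  generalize p 2 1 = c1
  generalize p 2 2 = c2
  generalize p 2 3 = c3
  generalize p 3 0 = d0
  generalize p 3 1 = d1
  generalize p 3 2 = d2
  generalize p 3 3 = d3
  ring

def toC (α : Form ℝ 8) : Form ℂ 8 := fun s => (α s : ℂ)

theorem wedge_smul_toC (c d : ℂ) (α β : Form ℝ 8) :
    wedge (c • toC α) (d • toC β) = (c * d) • toC (wedge α β) := by
  funext u
  simp only [wedge, toC, Pi.smul_apply, smul_eq_mul, signMerge_eq]
  push_cast
  rw [Finset.mul_sum]
  refine Finset.sum_congr rfl fun s _ => ?_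
  ring

theorem hstar_smul_toC (c : ℂ) (α : Form ℝ 8) : hstar (c • toC α) = c • toC (hstar α) := by
  funext u
  simp only [hstar, toC, Pi.smul_apply, smul_eq_mul, signMerge_eq]
  push_cast
  ring

theorem Phi8_toC : (Phi8 : Form ℂ 8) = (1 : ℂ) • toC Phi8 := by
  funext u; simp [Phi8_eq, toC]

theorem pi27_smul_toC (c : ℂ) (α : Form ℝ 8) : pi27 (c • toC α) = c • toC (pi27 α) := by
  unfold pi27
  rw [Phi8_toC, wedge_smul_toC, hstar_smul_toC]
  funext u
  simp only [toC, Pi.smul_apply, smul_eq_mul, Pi.add_apply]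
  push_cast
  ring

theorem pi47_smul_toC (c : ℂ) (α : Form ℝ 8) : pi47 (c • toC α) = c • toC (pi47 α) := by
  unfold pi47 inner'
  funext u
  simp only [lambda4_eq, toC, Pi.smul_apply, smul_eq_mul, Finset.sum_apply, Finset.sum_mul]
  push_cast
  simp only [Finset.mul_sum, Finset.sum_mul]
  refine Finset.sum_congr rfl fun s _ => Finset.sum_congr rfl fun v _ => ?_
  simp
  ring

theorem fnorm_sq (c : ℂ) (hc : ‖c‖ = 1) (α : Form ℝ 8) : fnorm (c • toC α) ^ 2 = ∑ s, (α s) ^ 2 := by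
  unfold fnorm
  rw [Real.sq_sqrt (Finset.sum_nonneg fun _ _ => sq_nonneg _)]
  simp [toC, hc]

theorem main_aux (p : Fin 4 → Fin 4 → ℝ) (F : Form ℂ 8) (hF : F = Complex.I • toC (g p)) :
      (1 + (2 : ℂ)⁻¹ * inner' (wedge F F) Phi8 +
          (24 : ℂ)⁻¹ * (hstar (wedge F (wedge F (wedge F F)))) ∅) ^ 2 +
        4 * (fnorm (pi27 (F + (6 : ℂ)⁻¹ • hstar (wedge F (wedge F F)))) : ℂ) ^ 2 +
        2 * (fnorm (pi47 (wedge F F)) : ℂ) ^ 2 =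
      (((1 : Matrix (Fin 8) (Fin 8) ℝ) + mat2 (g p)).det : ℂ) := by
  subst hF
  have e : Complex.I • toC (g p) + (6 : ℂ)⁻¹ • (Complex.I * (Complex.I * Complex.I)) •
      toC (hstar (wedge (g p) (wedge (g p) (g p)))) = Complex.I • toC
        (g p - (6 : ℝ)⁻¹ • hstar (wedge (g p) (wedge (g p) (g p)))) := by
    funext u
    simp only [toC, Pi.smul_apply, smul_eq_mul, Pi.add_apply, Pi.sub_apply]
    push_cast
    rw [Complex.I_mul_I]
    ring
  simp only [wedge_smul_toC, hstar_smul_toC]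
  rw [e, pi27_smul_toC, pi47_smul_toC]
  have r := real_main p
  rw [← fnorm_sq Complex.I (by simp), ← fnorm_sq (Complex.I * Complex.I) (by simp)] at r
  rw [← r]
  have i1 : inner' ((Complex.I * Complex.I) • toC (wedge (g p) (g p))) Phi8 =
      - ((∑ u, wedge (g p) (g p) u * (PhiZ u : ℝ) : ℝ) : ℂ) := by
    simp [inner', Phi8_eq, toC]
  rw [i1]
  have i2 : ((Complex.I * (Complex.I * (Complex.I * Complex.I))) •
      toC (hstar (wedge (g p) (wedge (g p) (wedge (g p) (g p)))))) ∅ =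
      ((hstar (wedge (g p) (wedge (g p) (wedge (g p) (g p)))) ∅ : ℝ) : ℂ) := by
    simp [toC, Complex.I_mul_I]
  rw [i2]
  push_cast
  ring

/-- Lemma 5.6, the mirror Cayley equality.  At every point of `B`:
`(1 + ½⟨(F_∇^S)², Φ⟩ + (1/24) *₈((F_∇^S)⁴))² + 4‖π²₇(F_∇^S + (1/6) *₈(F_∇^S)³)‖²
  + 2‖π⁴₇((F_∇^S)²)‖² = det(id + (-√-1 F_∇^S)♯)`. -/
theorem statement11 (B : Set (Fin 4 → ℝ)) (hB : IsOpen B)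
    (f : (Fin 4 → ℝ) → (Fin 4 → ℝ)) (hf : ContDiffOn ℝ (⊤ : ℕ∞) f B) :
    ∀ x ∈ B,
      (1 + (2 : ℂ)⁻¹ * inner' (wedge (FS8 f x) (FS8 f x)) Phi8 +
          (24 : ℂ)⁻¹ *
            (hstar (wedge (FS8 f x) (wedge (FS8 f x) (wedge (FS8 f x) (FS8 f x))))) ∅) ^ 2 +
        4 * (fnorm (pi27 (FS8 f x + (6 : ℂ)⁻¹ •
          hstar (wedge (FS8 f x) (wedge (FS8 f x) (FS8 f x))))) : ℂ) ^ 2 +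
        2 * (fnorm (pi47 (wedge (FS8 f x) (FS8 f x))) : ℂ) ^ 2 =
      (((1 : Matrix (Fin 8) (Fin 8) ℝ) + mat2 (gammaS f x)).det : ℂ) := by
  intro x _
  have h := main_aux (pd f x) (FS8 f x) (by
    funext s
    simp [FS8, toC, gammaS_eq])
  rw [gammaS_eq]
  exact h

end FMpaper
end
end
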